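/- arXiv:1207.1239 — 5 statements merged into one kernel-verified Lean document; each statement's English description precedes it below -/
import Mathlib

section
/- The incidence graph of points and lines of the projective plane ℙ²(𝔽₄) contains no induced cycle of length 14. -/
/-- The field with four elements. -/
abbrev F4 : Type := GaloisField 2 2

/-- The vector space `𝔽₄³`. -/
abbrev V3 : Type := Fin 3 → F4

/-- Points of `ℙ²(𝔽₄)`: 1-dimensional linear subspaces of `𝔽₄³`. -/
abbrev ProjPoint : Type := {P : Submodule F4 V3 // Module.finrank F4 P = 1}

/-- Lines of `ℙ²(𝔽₄)`: 2-dimensional linear subspaces of `𝔽₄³`. -/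
abbrev ProjLine : Type := {L : Submodule F4 V3 // Module.finrank F4 L = 2}

/-- The incidence relation: a point is adjacent to a line iff the point lies on the line. -/
def IncAdj : ProjPoint ⊕ ProjLine → ProjPoint ⊕ ProjLine → Prop
  | Sum.inl p, Sum.inr l => p.1 ≤ l.1
  | Sum.inr l, Sum.inl p => p.1 ≤ l.1
  | _, _ => False

/-- The incidence graph of points and lines of `ℙ²(𝔽₄)`. -/
def IncGraph : SimpleGraph (ProjPoint ⊕ ProjLine) where
  Adj := IncAdj
  symm := by constructor; rintro (p | l) (q | m) h <;> first | exact h.elim | exact h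
  loopless := by constructor; rintro (p | l) h <;> exact h.elim

/-- An induced cycle of length `k` in a simple graph `G`: a `k`-tuple of distinct
vertices, indexed cyclically by `ℤ/kℤ`, with consecutive vertices adjacent and
non-consecutive vertices non-adjacent. -/
def IsInducedCycle {V : Type*} (G : SimpleGraph V) (k : ℕ) (c : ZMod k → V) : Prop :=
  Function.Injective c ∧ ∀ i j : ZMod k, G.Adj (c i) (c j) ↔ (j = i + 1 ∨ i = j + 1)

/-- The determinant of three row vectors. -/
def det3 {K : Type*} [Field K] (u v w : Fin 3 → K) : K :=
  u 0 * (v 1 * w 2 - v 2 * w 1) - u 1 * (v 0 * w 2 - v 2 * w 0) + u 2 * (v 0 * w 1 - v 1 * w 0)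

/-- Each side of the heptagon misses the five other vertices. -/
def Hept {K : Type*} [Field K] (v : Fin 7 → Fin 3 → K) : Prop :=
  ∀ i k : Fin 7, k ≠ i → k ≠ i + 1 → det3 (v i) (v (i + 1)) (v k) ≠ 0

/-- Model of the field with four elements: `(a, b)` stands for `a + b w`. -/
abbrev M4 : Type := Bool × Bool

def madd (x y : M4) : M4 := (xor x.1 y.1, xor x.2 y.2)

def mmul (x y : M4) : M4 :=
  (xor (x.1 && y.1) (x.2 && y.2), xor (xor (x.1 && y.2) (x.2 && y.1)) (x.2 && y.2))

def mnz (x : M4) : Bool := x.1 || x.2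

def mdet (u v w : M4 × M4 × M4) : Bool :=
  mnz (madd (madd
    (mmul u.1 (madd (mmul v.2.1 w.2.2) (mmul v.2.2 w.2.1)))
    (mmul u.2.1 (madd (mmul v.1 w.2.2) (mmul v.2.2 w.1))))
    (mmul u.2.2 (madd (mmul v.1 w.2.1) (mmul v.2.1 w.1))))

def mO : M4 := (false, false)
def mI : M4 := (true, false)
def m0 : M4 × M4 × M4 := (mI, mO, mO)
def m1 : M4 × M4 × M4 := (mO, mI, mO)
def m2 : M4 × M4 × M4 := (mO, mO, mI)
def m3 : M4 × M4 × M4 := (mI, mI, mI)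

def cond4 (p : M4 × M4 × M4) : Bool :=
  mdet m1 m2 p && mdet m2 m3 p && mdet m3 p m0 && mdet m3 p m1

def cond5 (p q : M4 × M4 × M4) : Bool :=
  mdet m1 m2 q && mdet m2 m3 q && mdet m3 p q && mdet p q m0 && mdet p q m1 && mdet p q m2 &&
    mdet p q m3

def cond6 (p q r : M4 × M4 × M4) : Bool :=
  mdet m1 m2 r && mdet m2 m3 r && mdet m3 p r && mdet p q r && mdet q r m0 && mdet q r m1 &&
    mdet q r m2 && mdet q r m3 && mdet r m0 m1 && mdet r m0 m2 && mdet r m0 m3 && mdet r m0 p &&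
    mdet r m0 q

theorem model_false : ∀ x4 y4 : M4, cond4 (x4, y4, mI) = true →
    ∀ x5 y5 : M4, cond5 (x4, y4, mI) (x5, y5, mI) = true →
    ∀ x6 y6 : M4, cond6 (x4, y4, mI) (x5, y5, mI) (x6, y6, mI) = false := by
  decide +kernel

section
variable {K : Type*} [Field K]

theorem hept_scale (v : Fin 7 → Fin 3 → K) (hv : Hept v) (N : Matrix (Fin 3) (Fin 3) K)
    (hN : N.det ≠ 0) (s : Fin 7 → K) (hs : ∀ i, s i ≠ 0) :
    Hept (fun i => s i • Matrix.vecMul (v i) N) := by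
  intro i k h1 h2
  have key : ∀ a b c : Fin 7,
      det3 (s a • Matrix.vecMul (v a) N) (s b • Matrix.vecMul (v b) N)
        (s c • Matrix.vecMul (v c) N) = s a * s b * s c * N.det * det3 (v a) (v b) (v c) := by
    intro a b c
    simp only [det3, Matrix.vecMul, dotProduct, Fin.sum_univ_three, Pi.smul_apply, smul_eq_mul,
      Matrix.det_fin_three]
    ring
  simp only [key]
  exact mul_ne_zero (mul_ne_zero (mul_ne_zero (mul_ne_zero (hs _) (hs _)) (hs _)) hN) (hv i k h1 h2)

/-- The evaluation of the model. -/
def phi (w : K) (x : M4) : K := (if x.1 then 1 else 0) + (if x.2 then w else 0)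

theorem phi_add (w : K) (h2 : (2 : K) = 0) (x y : M4) :
    phi w (madd x y) = phi w x + phi w y := by
  rcases x with ⟨_ | _, _ | _⟩ <;> rcases y with ⟨_ | _, _ | _⟩ <;> simp [phi, madd] <;> grind

theorem phi_mul (w : K) (h2 : (2 : K) = 0) (hw : w ^ 2 + w + 1 = 0) (x y : M4) :
    phi w (mmul x y) = phi w x * phi w y := by
  rcases x with ⟨_ | _, _ | _⟩ <;> rcases y with ⟨_ | _, _ | _⟩ <;> simp [phi, mmul] <;> grind

theorem mnz_of_phi (w : K) (x : M4) (h : phi w x ≠ 0) : mnz x = true := by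
  rcases x with ⟨_ | _, _ | _⟩ <;> simp_all [phi, mnz]

/-- The vector represented by a triple in the model. -/
def pv (w : K) (m : M4 × M4 × M4) : Fin 3 → K := ![phi w m.1, phi w m.2.1, phi w m.2.2]

theorem mdet_of (w : K) (h2 : (2 : K) = 0) (hw : w ^ 2 + w + 1 = 0) (a b c : M4 × M4 × M4)
    (h : det3 (pv w a) (pv w b) (pv w c) ≠ 0) : mdet a b c = true := by
  apply mnz_of_phi w
  have hneg : ∀ x y : K, x - y = x + y := fun x y => by linear_combination (-y) * h2
  simpa only [phi_add w h2, phi_mul w h2 hw, det3, pv, hneg, Matrix.cons_val_zero,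
    Matrix.cons_val_one, Matrix.cons_val] using h

theorem phi_surj (w : K) (h2 : (2 : K) = 0) (hw : w ^ 2 + w + 1 = 0) (x : K) (hx : x ^ 4 = x) :
    ∃ m, phi w m = x := by
  have h : x * ((x - 1) * ((x - w) * (x - (1 + w)))) = 0 := by grind
  rcases mul_eq_zero.1 h with h | h
  · exact ⟨(false, false), by simp [phi, h]⟩
  rcases mul_eq_zero.1 h with h | h
  · exact ⟨(true, false), by simp [phi, sub_eq_zero.1 h]⟩
  rcases mul_eq_zero.1 h with h | h
  · exact ⟨(false, true), by simp [phi, sub_eq_zero.1 h]⟩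
  · exact ⟨(true, true), by simp [phi, sub_eq_zero.1 h]⟩

theorem normalized_false (w : K) (h2 : (2 : K) = 0) (hw : w ^ 2 + w + 1 = 0)
    (hK : ∀ x : K, x ^ 4 = x) (u : Fin 7 → Fin 3 → K) (hu : Hept u)
    (h0 : u 0 = ![1, 0, 0]) (h1 : u 1 = ![0, 1, 0]) (h2' : u 2 = ![0, 0, 1])
    (h3 : u 3 = ![1, 1, 1]) (h4 : u 4 2 = 1) (h5 : u 5 2 = 1) (h6 : u 6 2 = 1) : False := by
  have hI : phi w mI = 1 := by simp [phi, mI]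
  have hO : phi w mO = 0 := by simp [phi, mO]
  have e0 : u 0 = pv w m0 := by simp [pv, m0, hI, hO, h0]
  have e1 : u 1 = pv w m1 := by simp [pv, m1, hI, hO, h1]
  have e2 : u 2 = pv w m2 := by simp [pv, m2, hI, hO, h2']
  have e3 : u 3 = pv w m3 := by simp [pv, m3, hI, h3]
  have ex : ∀ i, u i 2 = 1 → ∃ x y, u i = pv w (x, y, mI) := by
    intro i hi
    obtain ⟨x, hx⟩ := phi_surj w h2 hw (u i 0) (hK _)
    obtain ⟨y, hy⟩ := phi_surj w h2 hw (u i 1) (hK _)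
    refine ⟨x, y, ?_⟩
    ext j
    fin_cases j <;> simp [pv, hx, hy, hI, hi]
  obtain ⟨x4, y4, e4⟩ := ex 4 h4
  obtain ⟨x5, y5, e5⟩ := ex 5 h5
  obtain ⟨x6, y6, e6⟩ := ex 6 h6
  have H : ∀ i j k : Fin 7, j = i + 1 → k ≠ i → k ≠ j → ∀ a b c, u i = pv w a → u j = pv w b →
      u k = pv w c → mdet a b c = true := by
    rintro i j k rfl hk1 hk2 a b c ha hb hc
    exact mdet_of w h2 hw a b c (ha ▸ hb ▸ hc ▸ hu i k hk1 hk2)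
  have c4 : cond4 (x4, y4, mI) = true := by
    simp only [cond4, Bool.and_eq_true]
    exact ⟨⟨⟨H 1 2 4 (by decide) (by decide) (by decide) _ _ _ e1 e2 e4,
      H 2 3 4 (by decide) (by decide) (by decide) _ _ _ e2 e3 e4⟩,
      H 3 4 0 (by decide) (by decide) (by decide) _ _ _ e3 e4 e0⟩,
      H 3 4 1 (by decide) (by decide) (by decide) _ _ _ e3 e4 e1⟩
  have c5 : cond5 (x4, y4, mI) (x5, y5, mI) = true := by
    simp only [cond5, Bool.and_eq_true]
    exact ⟨⟨⟨⟨⟨⟨H 1 2 5 (by decide) (by decide) (by decide) _ _ _ e1 e2 e5,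
      H 2 3 5 (by decide) (by decide) (by decide) _ _ _ e2 e3 e5⟩,
      H 3 4 5 (by decide) (by decide) (by decide) _ _ _ e3 e4 e5⟩,
      H 4 5 0 (by decide) (by decide) (by decide) _ _ _ e4 e5 e0⟩,
      H 4 5 1 (by decide) (by decide) (by decide) _ _ _ e4 e5 e1⟩,
      H 4 5 2 (by decide) (by decide) (by decide) _ _ _ e4 e5 e2⟩,
      H 4 5 3 (by decide) (by decide) (by decide) _ _ _ e4 e5 e3⟩
  have c6 : cond6 (x4, y4, mI) (x5, y5, mI) (x6, y6, mI) = true := by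
    simp only [cond6, Bool.and_eq_true]
    exact ⟨⟨⟨⟨⟨⟨⟨⟨⟨⟨⟨⟨H 1 2 6 (by decide) (by decide) (by decide) _ _ _ e1 e2 e6,
      H 2 3 6 (by decide) (by decide) (by decide) _ _ _ e2 e3 e6⟩,
      H 3 4 6 (by decide) (by decide) (by decide) _ _ _ e3 e4 e6⟩,
      H 4 5 6 (by decide) (by decide) (by decide) _ _ _ e4 e5 e6⟩,
      H 5 6 0 (by decide) (by decide) (by decide) _ _ _ e5 e6 e0⟩,
      H 5 6 1 (by decide) (by decide) (by decide) _ _ _ e5 e6 e1⟩,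
      H 5 6 2 (by decide) (by decide) (by decide) _ _ _ e5 e6 e2⟩,
      H 5 6 3 (by decide) (by decide) (by decide) _ _ _ e5 e6 e3⟩,
      H 6 0 1 (by decide) (by decide) (by decide) _ _ _ e6 e0 e1⟩,
      H 6 0 2 (by decide) (by decide) (by decide) _ _ _ e6 e0 e2⟩,
      H 6 0 3 (by decide) (by decide) (by decide) _ _ _ e6 e0 e3⟩,
      H 6 0 4 (by decide) (by decide) (by decide) _ _ _ e6 e0 e4⟩,
      H 6 0 5 (by decide) (by decide) (by decide) _ _ _ e6 e0 e5⟩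
  have := model_false x4 y4 c4 x5 y5 c5 x6 y6
  rw [c6] at this
  cases this

theorem hept_false (w : K) (h2 : (2 : K) = 0) (hw : w ^ 2 + w + 1 = 0)
    (hK : ∀ x : K, x ^ 4 = x) (v : Fin 7 → Fin 3 → K) (hv : Hept v) : False := by
  let M : Matrix (Fin 3) (Fin 3) K := Matrix.of ![v 0, v 1, v 2]
  have hM : M.det ≠ 0 := by
    have h := hv 0 2 (by decide) (by decide)
    have e : M.det = det3 (v 0) (v (0 + 1)) (v 2) := by
      simp only [M, Matrix.det_fin_three, det3, zero_add, Matrix.of_apply, Matrix.cons_val_zero,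
        Matrix.cons_val_one, Matrix.cons_val]
      ring
    rwa [e]
  have hMi : M⁻¹.det ≠ 0 := by
    rw [Matrix.det_nonsing_inv, Ring.inverse_eq_inv']
    exact inv_ne_zero hM
  have hone : M * M⁻¹ = 1 := Matrix.mul_nonsing_inv _ (isUnit_iff_ne_zero.2 hM)
  have hrow : ∀ i : Fin 3, Matrix.vecMul (M i) M⁻¹ = (1 : Matrix (Fin 3) (Fin 3) K) i := by
    intro i
    rw [← hone]
    rfl
  obtain ⟨t, ht, t0, t1, t2⟩ : ∃ t : Fin 7 → Fin 3 → K, Hept t ∧ t 0 = ![1, 0, 0] ∧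
      t 1 = ![0, 1, 0] ∧ t 2 = ![0, 0, 1] := by
    refine ⟨_, hept_scale v hv M⁻¹ hMi (fun _ => 1) (fun _ => one_ne_zero), ?_, ?_, ?_⟩
    · have := hrow 0
      simp only [one_smul]
      refine Eq.trans this ?_
      ext j; fin_cases j <;> simp [Matrix.one_apply]
    · have := hrow 1
      simp only [one_smul]
      refine Eq.trans this ?_
      ext j; fin_cases j <;> simp [Matrix.one_apply]
    · have := hrow 2
      simp only [one_smul]
      refine Eq.trans this ?_
      ext j; fin_cases j <;> simp [Matrix.one_apply]
  have hz : ∀ j : Fin 7, j ≠ 0 → j ≠ 1 → t j 2 ≠ 0 := by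
    intro j h0 h1
    have := ht 0 j h0 h1
    simpa [det3, t0, t1] using this
  have hx : t 3 0 ≠ 0 := by
    have := ht 1 3 (by decide) (by decide)
    have e : (1 : Fin 7) + 1 = 2 := by decide
    simpa [det3, e, t1, t2] using this
  have hy : t 3 1 ≠ 0 := by
    have := ht 2 0 (by decide) (by decide)
    have e : (2 : Fin 7) + 1 = 3 := by decide
    simpa [det3, e, t2, t0] using this
  have hz3 := hz 3 (by decide) (by decide)
  have hz4 := hz 4 (by decide) (by decide)
  have hz5 := hz 5 (by decide) (by decide)
  have hz6 := hz 6 (by decide) (by decide)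
  have hS := hept_scale t ht (Matrix.diagonal ![(t 3 0)⁻¹, (t 3 1)⁻¹, (t 3 2)⁻¹])
    (by simp [Matrix.det_diagonal, Fin.prod_univ_three, hx, hy, hz3])
    ![t 3 0, t 3 1, t 3 2, 1, t 3 2 * (t 4 2)⁻¹, t 3 2 * (t 5 2)⁻¹, t 3 2 * (t 6 2)⁻¹]
    (by intro i; fin_cases i <;> simp [hx, hy, hz3, hz4, hz5, hz6])
  refine normalized_false w h2 hw hK _ hS ?_ ?_ ?_ ?_ ?_ ?_ ?_
  · ext j; fin_cases j <;> simp [Matrix.vecMul_diagonal, t0, hx]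
  · ext j; fin_cases j <;> simp [Matrix.vecMul_diagonal, t1, hy]
  · ext j; fin_cases j <;> simp [Matrix.vecMul_diagonal, t2, hz3]
  · ext j; fin_cases j <;> simp [Matrix.vecMul_diagonal, hx, hy, hz3]
  · simp [Matrix.vecMul_diagonal]; field_simp
  · simp [Matrix.vecMul_diagonal]; field_simp
  · simp [Matrix.vecMul_diagonal]; field_simp

/-- Independent triples have nonzero determinant. -/
theorem det3_ne_zero_of (a b c : Fin 3 → K)
    (h : ∀ x y z : K, x • a + y • b + z • c = 0 → x = 0 ∧ y = 0 ∧ z = 0) : det3 a b c ≠ 0 := by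
  intro hd
  have e : (Matrix.of ![a, b, c]).det = 0 := by
    rw [← hd]
    simp only [Matrix.det_fin_three, det3, Matrix.of_apply, Matrix.cons_val_zero,
      Matrix.cons_val_one, Matrix.cons_val]
    ring
  obtain ⟨s, hs0, hs⟩ := Matrix.exists_vecMul_eq_zero_iff.2 e
  apply hs0
  obtain ⟨h1, h2, h3⟩ := h (s 0) (s 1) (s 2) (by
    rw [← hs]
    ext j
    simp [Matrix.vecMul, dotProduct, Fin.sum_univ_three])
  ext j
  fin_cases j <;> simp [h1, h2, h3]

end

theorem F4_card : Nat.card F4 = 4 := by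
  rw [GaloisField.card 2 2 (by decide)]; norm_num

theorem F4_pow (x : F4) : x ^ 4 = x := by
  have : Fintype F4 := Fintype.ofFinite _
  have h := FiniteField.pow_card x
  rwa [← Nat.card_eq_fintype_card, F4_card] at h

theorem F4_two : (2 : F4) = 0 := by
  exact_mod_cast CharP.cast_eq_zero F4 2

theorem F4_gen : ∃ w : F4, w ^ 2 + w + 1 = 0 := by
  classical
  have : Fintype F4 := Fintype.ofFinite _
  have hc : Fintype.card F4 = 4 := by rw [← Nat.card_eq_fintype_card, F4_card]
  obtain ⟨w, -, hw⟩ := Finset.exists_mem_notMem_of_card_lt_card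
    (s := ({0, 1} : Finset F4)) (t := Finset.univ) (by
      rw [Finset.card_univ, hc]
      exact lt_of_le_of_lt Finset.card_le_two (by norm_num))
  simp only [Finset.mem_insert, Finset.mem_singleton, not_or] at hw
  refine ⟨w, ?_⟩
  have h : w * ((w - 1) * (w ^ 2 + w + 1)) = 0 := by linear_combination F4_pow w
  rcases mul_eq_zero.1 h with h | h
  · exact absurd h hw.1
  rcases mul_eq_zero.1 h with h | h
  · exact absurd (sub_eq_zero.1 h) hw.2
  · exact h

theorem config_false (v : Fin 7 → V3) (L : Fin 7 → Submodule F4 V3)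
    (h : ∀ i n, v i ∈ L n ↔ (i = n ∨ i = n + 1)) : False := by
  obtain ⟨w, hw⟩ := F4_gen
  refine hept_false w F4_two hw F4_pow v ?_
  intro i k hk1 hk2
  have a1 : v i ∈ L i := (h _ _).2 (Or.inl rfl)
  have a2 : v (i + 1) ∈ L i := (h _ _).2 (Or.inr rfl)
  have a3 : v k ∉ L i := fun hh => ((h _ _).1 hh).elim hk1 hk2
  have a4 : v (i + 1) ∈ L (i + 1) := (h _ _).2 (Or.inl rfl)
  have a5 : v i ∉ L (i + 1) := by
    rw [h]
    clear a1 a2 a3 a4 hk1 hk2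
    revert i
    decide
  have hmem : ∀ (S : Submodule F4 V3) (z : F4) (c : V3), c ∉ S → z • c ∈ S → z = 0 := by
    intro S z c hc hz
    by_contra hne
    exact hc ((S.smul_mem_iff hne).1 hz)
  apply det3_ne_zero_of
  intro x y z hxyz
  have hz : z = 0 := by
    refine hmem (L i) z _ a3 ?_
    have e : z • v k = -(x • v i + y • v (i + 1)) := by
      rw [eq_neg_iff_add_eq_zero, add_comm]; exact hxyz
    rw [e]
    exact (L i).neg_mem ((L i).add_mem ((L i).smul_mem _ a1) ((L i).smul_mem _ a2))
  subst hz
  rw [zero_smul, add_zero] at hxyz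
  have hx : x = 0 := by
    refine hmem (L (i + 1)) x _ a5 ?_
    rw [eq_neg_of_add_eq_zero_left hxyz]
    exact (L (i + 1)).neg_mem ((L (i + 1)).smul_mem _ a4)
  subst hx
  rw [zero_smul, zero_add] at hxyz
  refine ⟨rfl, ?_, rfl⟩
  rcases smul_eq_zero.1 hxyz with hy | hy
  · exact hy
  · exfalso
    have : v (i + 1) ∈ L (i + 1 + 1) := by rw [hy]; exact Submodule.zero_mem _
    rw [h] at this
    clear a1 a2 a3 a4 a5 hk1 hk2 hxyz hy
    revert i
    decide

theorem cycle_false (c : ZMod 14 → (ProjPoint ⊕ ProjLine)) (hc : IsInducedCycle IncGraph 14 c)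
    (p : ProjPoint) (hp : c 0 = Sum.inl p) : False := by
  obtain ⟨-, hadj⟩ := hc
  have s1 : ∀ i p, c i = Sum.inl p → ∃ l, c (i + 1) = Sum.inr l := by
    intro i p hi
    have h := (hadj i (i + 1)).2 (Or.inl rfl)
    rw [hi] at h
    rcases hc : c (i + 1) with q | l
    · rw [hc] at h; exact h.elim
    · exact ⟨l, rfl⟩
  have s2 : ∀ i l, c i = Sum.inr l → ∃ p, c (i + 1) = Sum.inl p := by
    intro i p hi
    have h := (hadj i (i + 1)).2 (Or.inl rfl)
    rw [hi] at h
    rcases hc : c (i + 1) with q | l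
    · exact ⟨q, rfl⟩
    · rw [hc] at h; exact h.elim
  have hev : ∀ n : ℕ, ∃ p, c (2 * (n : ZMod 14)) = Sum.inl p := by
    intro n
    induction n with
    | zero => exact ⟨p, by simpa using hp⟩
    | succ n ih =>
      obtain ⟨q, hq⟩ := ih
      obtain ⟨l, hl⟩ := s1 _ _ hq
      obtain ⟨r, hr⟩ := s2 _ _ hl
      refine ⟨r, ?_⟩
      rw [← hr]
      congr 1
      push_cast
      ring
  have hod : ∀ n : ℕ, ∃ l, c (2 * (n : ZMod 14) + 1) = Sum.inr l := by
    intro n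
    obtain ⟨q, hq⟩ := hev n
    exact s1 _ _ hq
  choose P hP using hev
  choose L hL using hod
  have hv : ∀ n, ∃ v : V3, ∀ S : Submodule F4 V3, v ∈ S ↔ (P n).1 ≤ S := by
    intro n
    obtain ⟨v, hv0, hv⟩ := finrank_eq_one_iff'.1 (P n).2
    refine ⟨v.1, fun S => ⟨?_, fun h => h v.2⟩⟩
    intro h x hx
    obtain ⟨a, ha⟩ := hv ⟨x, hx⟩
    have : x = a • v.1 := by rw [← Submodule.coe_smul, ha]
    rw [this]
    exact S.smul_mem _ h
  choose v hv using hv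
  refine config_false (fun i => v i.val) (fun n => (L n.val).1) ?_
  intro i n
  have h := hadj (2 * ((i.val : ℕ) : ZMod 14)) (2 * ((n.val : ℕ) : ZMod 14) + 1)
  rw [hP, hL] at h
  refine (hv _ _).trans (Iff.trans h ?_)
  clear h
  revert i n
  decide

theorem no_induced_cycle_of_length_14 :
    ¬ ∃ c : ZMod 14 → (ProjPoint ⊕ ProjLine), IsInducedCycle IncGraph 14 c := by
  rintro ⟨c, hc⟩
  rcases h0 : c 0 with p | l
  · exact cycle_false c hc p h0
  · have h := (hc.2 0 1).2 (Or.inl (by simp))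
    rcases h1 : c 1 with p | m
    · refine cycle_false (fun i => c (i + 1)) ⟨fun a b hab => ?_, fun i j => ?_⟩ p (by simpa using h1)
      · exact add_right_cancel (hc.1 hab)
      · rw [hc.2]
        constructor
        · rintro (h | h)
          · exact Or.inl (add_right_cancel h)
          · exact Or.inr (add_right_cancel h)
        · rintro (h | h)
          · exact Or.inl (by rw [h])
          · exact Or.inr (by rw [h])
    · rw [h0, h1] at h
      exact h.elim
end

section
/- For every integer n ≥ 10, the incidence graph of points and lines of the projective plane ℙ²(𝔽₄) contains no induced cycle of length 2n. -/
namespace PlaneFour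

/-- Addition table of the field with four elements `0, 1, ω, ω + 1`. -/
def addT (a b : Fin 4) : Fin 4 :=
  (![![0, 1, 2, 3], ![1, 0, 3, 2], ![2, 3, 0, 1], ![3, 2, 1, 0]] : Fin 4 → Fin 4 → Fin 4) a b

/-- Multiplication table of the field with four elements. -/
def mulT (a b : Fin 4) : Fin 4 :=
  (![![0, 0, 0, 0], ![0, 1, 2, 3], ![0, 2, 3, 1], ![0, 3, 1, 2]] : Fin 4 → Fin 4 → Fin 4) a b

abbrev Code : Type := Fin 4 × Fin 4 × Fin 4

/-- Determinant of three coded vectors (characteristic two). -/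
def detT (x y z : Code) : Fin 4 :=
  addT (mulT x.1 (addT (mulT y.2.1 z.2.2) (mulT y.2.2 z.2.1)))
    (addT (mulT x.2.1 (addT (mulT y.1 z.2.2) (mulT y.2.2 z.1)))
      (mulT x.2.2 (addT (mulT y.1 z.2.1) (mulT y.2.1 z.1))))

/-- `x` is off all lines joining consecutive points of the (reversed) path. -/
def offLines : List Code → Code → Bool
  | a :: b :: l, x => (detT b a x != 0) && offLines (b :: l) x
  | _, _ => true

/-- `x` extends the (reversed) path to an induced path. -/
def good : List Code → Code → Bool
  | a :: l, x => offLines (a :: l) x && l.all (fun y => detT a x y != 0)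
  | _, _ => true

def s0 : List Code := [(1,1,1), (0,0,1), (0,1,0), (1,0,0)]

set_option maxRecDepth 100000 in
set_option maxHeartbeats 4000000 in
theorem search :
    ∀ b4 c4 : Fin 4, good s0 (1,b4,c4) = true →
    ∀ b5 c5 : Fin 4, good ((1,b4,c4) :: s0) (1,b5,c5) = true →
    ∀ b6 c6 : Fin 4, good ((1,b5,c5) :: (1,b4,c4) :: s0) (1,b6,c6) = true →
    ∀ b7 c7 : Fin 4, good ((1,b6,c6) :: (1,b5,c5) :: (1,b4,c4) :: s0) (1,b7,c7) = true →
    ∀ b8 c8 : Fin 4,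
      good ((1,b7,c7) :: (1,b6,c6) :: (1,b5,c5) :: (1,b4,c4) :: s0) (1,b8,c8) = true →
    ∀ b9 c9 : Fin 4,
      good ((1,b8,c8) :: (1,b7,c7) :: (1,b6,c6) :: (1,b5,c5) :: (1,b4,c4) :: s0)
        (1,b9,c9) = true →
    ∀ b c : Fin 4,
      good [(1,b9,c9), (1,b8,c8), (1,b7,c7), (1,b6,c6), (1,b5,c5), (1,b4,c4),
        (1,1,1), (0,0,1), (0,1,0)] (1,b,c) = false := by
  decide +kernel

theorem good_of (q : ℕ → Code) (T : ∀ i j k : ℕ, k = i + 1 → i < 10 → j < 11 → j ≠ i → j ≠ i + 1 → ¬ (i = 0 ∧ j = 10) →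
      ¬ (i = 9 ∧ j = 0) → (detT (q i) (q k) (q j) != 0) = true) :
    good [q 3, q 2, q 1, q 0] (q 4) = true ∧
    good [q 4, q 3, q 2, q 1, q 0] (q 5) = true ∧
    good [q 5, q 4, q 3, q 2, q 1, q 0] (q 6) = true ∧
    good [q 6, q 5, q 4, q 3, q 2, q 1, q 0] (q 7) = true ∧
    good [q 7, q 6, q 5, q 4, q 3, q 2, q 1, q 0] (q 8) = true ∧
    good [q 8, q 7, q 6, q 5, q 4, q 3, q 2, q 1, q 0] (q 9) = true ∧
    good [q 9, q 8, q 7, q 6, q 5, q 4, q 3, q 2, q 1] (q 10) = true := by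
  simp only [good, offLines, List.all_cons, List.all_nil, Bool.and_eq_true, and_true]
  refine ⟨?_, ?_, ?_, ?_, ?_, ?_, ?_⟩ <;> (repeat' apply And.intro) <;>
    exact T _ _ _ rfl (by decide) (by decide) (by decide) (by decide) (by decide) (by decide)

section field
variable {F : Type*} [Field F]

def dec (w : F) : Fin 4 → F := ![0, 1, w, w + 1]

theorem dec_add (h2 : (2 : F) = 0) (w : F) (a b : Fin 4) :
    dec w (addT a b) = dec w a + dec w b := by
  fin_cases a <;> fin_cases b <;> simp [dec, addT] <;> grind
  
theorem dec_mul (h2 : (2 : F) = 0) (w : F) (hw : w ^ 2 = w + 1) (a b : Fin 4) :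
    dec w (mulT a b) = dec w a * dec w b := by
  fin_cases a <;> fin_cases b <;> simp [dec, mulT] <;> grind

/-- The 3 by 3 determinant of three vectors. -/
def d (x y z : Fin 3 → F) : F := Matrix.det (Matrix.of ![x, y, z])

theorem d_eq (x y z : Fin 3 → F) : d x y z =
    x 0 * y 1 * z 2 - x 0 * y 2 * z 1 - x 1 * y 0 * z 2 + x 1 * y 2 * z 0 +
      x 2 * y 0 * z 1 - x 2 * y 1 * z 0 := by
  simp [d, Matrix.det_fin_three]

theorem d_smul (a b c : F) (x y z : Fin 3 → F) :
    d (a • x) (b • y) (c • z) = a * b * c * d x y z := by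
  simp only [d_eq, Pi.smul_apply, smul_eq_mul]; ring

theorem d_vecMul (A : Matrix (Fin 3) (Fin 3) F) (x y z : Fin 3 → F) :
    d (Matrix.vecMul x A) (Matrix.vecMul y A) (Matrix.vecMul z A) = d x y z * A.det := by
  unfold d
  rw [← Matrix.det_mul]
  congr 1
  ext i j
  fin_cases i <;> simp [Matrix.mul_apply, Matrix.vecMul, dotProduct]

def decv (w : F) (x : Code) : Fin 3 → F := ![dec w x.1, dec w x.2.1, dec w x.2.2]

theorem dec_det (h2 : (2 : F) = 0) (w : F) (hw : w ^ 2 = w + 1) (x y z : Code) :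
    dec w (detT x y z) = d (decv w x) (decv w y) (decv w z) := by
  simp only [detT, dec_add h2, dec_mul h2 w hw, d_eq, decv]
  simp
  grind

theorem frame (v : ℕ → Fin 3 → F) (h012 : d (v 0) (v 1) (v 2) ≠ 0)
    (h013 : d (v 0) (v 1) (v 3) ≠ 0) (h123 : d (v 1) (v 2) (v 3) ≠ 0)
    (h230 : d (v 2) (v 3) (v 0) ≠ 0) :
    ∃ A : Matrix (Fin 3) (Fin 3) F, A.det ≠ 0 ∧
      (∃ s : F, s ≠ 0 ∧ Matrix.vecMul (v 0) A = s • ![1, 0, 0]) ∧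
      (∃ s : F, s ≠ 0 ∧ Matrix.vecMul (v 1) A = s • ![0, 1, 0]) ∧
      (∃ s : F, s ≠ 0 ∧ Matrix.vecMul (v 2) A = s • ![0, 0, 1]) ∧
      Matrix.vecMul (v 3) A = ![1, 1, 1] := by
  set M : Matrix (Fin 3) (Fin 3) F := Matrix.of ![v 0, v 1, v 2] with hM
  have hdet : M.det ≠ 0 := h012
  have hMM : M * M⁻¹ = 1 := Matrix.mul_nonsing_inv _ (Ne.isUnit hdet)
  have hdi : M⁻¹.det ≠ 0 := by
    intro h
    have := congrArg Matrix.det hMM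
    simp [h] at this
  have e0 : Matrix.vecMul (v 0) M⁻¹ = ![1, 0, 0] := by
    have : Matrix.vecMul (v 0) M⁻¹ = (M * M⁻¹) 0 := by
      ext j; simp [Matrix.mul_apply, Matrix.vecMul, dotProduct, hM]
    rw [this, hMM]; ext j; fin_cases j <;> simp [Matrix.one_apply]
  have e1 : Matrix.vecMul (v 1) M⁻¹ = ![0, 1, 0] := by
    have : Matrix.vecMul (v 1) M⁻¹ = (M * M⁻¹) 1 := by
      ext j; simp [Matrix.mul_apply, Matrix.vecMul, dotProduct, hM]
    rw [this, hMM]; ext j; fin_cases j <;> simp [Matrix.one_apply]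
  have e2 : Matrix.vecMul (v 2) M⁻¹ = ![0, 0, 1] := by
    have : Matrix.vecMul (v 2) M⁻¹ = (M * M⁻¹) 2 := by
      ext j; simp [Matrix.mul_apply, Matrix.vecMul, dotProduct, hM]
    rw [this, hMM]; ext j; fin_cases j <;> simp [Matrix.one_apply]
  set x := Matrix.vecMul (v 3) M⁻¹ with hx
  have k2 : x 2 ≠ 0 := by
    have := mul_ne_zero h013 hdi
    rw [← d_vecMul, e0, e1, ← hx, d_eq] at this
    simpa using this
  have k0 : x 0 ≠ 0 := by
    have := mul_ne_zero h123 hdi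
    rw [← d_vecMul, e1, e2, ← hx, d_eq] at this
    simpa using this
  have k1 : x 1 ≠ 0 := by
    have := mul_ne_zero h230 hdi
    rw [← d_vecMul, e0, e2, ← hx, d_eq] at this
    simpa using this
  refine ⟨M⁻¹ * Matrix.diagonal ![(x 0)⁻¹, (x 1)⁻¹, (x 2)⁻¹], ?_, ⟨(x 0)⁻¹, inv_ne_zero k0, ?_⟩,
    ⟨(x 1)⁻¹, inv_ne_zero k1, ?_⟩, ⟨(x 2)⁻¹, inv_ne_zero k2, ?_⟩, ?_⟩
  · rw [Matrix.det_mul]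
    refine mul_ne_zero hdi ?_
    simp [Matrix.det_diagonal, Fin.prod_univ_three, k0, k1, k2]
  · rw [← Matrix.vecMul_vecMul, e0]
    ext j; fin_cases j <;> simp [Matrix.vecMul_diagonal]
  · rw [← Matrix.vecMul_vecMul, e1]
    ext j; fin_cases j <;> simp [Matrix.vecMul_diagonal]
  · rw [← Matrix.vecMul_vecMul, e2]
    ext j; fin_cases j <;> simp [Matrix.vecMul_diagonal]
  · rw [← Matrix.vecMul_vecMul, ← hx]
    ext j; fin_cases j <;> simp [Matrix.vecMul_diagonal, k0, k1, k2]

theorem no_path (h2 : (2 : F) = 0) (w : F) (hw : w ^ 2 = w + 1)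
    (hsurj : Function.Surjective (dec w)) (v : ℕ → Fin 3 → F)
    (H : ∀ i j : ℕ, i < 10 → j < 11 → j ≠ i → j ≠ i + 1 → ¬ (i = 0 ∧ j = 10) →
      ¬ (i = 9 ∧ j = 0) → d (v i) (v (i + 1)) (v j) ≠ 0) : False := by
  obtain ⟨A, hA, ⟨r0, hr0, e0⟩, ⟨r1, hr1, e1⟩, ⟨r2, hr2, e2⟩, e3⟩ := frame v
    (H 0 2 (by lia) (by lia) (by lia) (by lia) (by lia) (by lia))
    (H 0 3 (by lia) (by lia) (by lia) (by lia) (by lia) (by lia))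
    (H 1 3 (by lia) (by lia) (by lia) (by lia) (by lia) (by lia))
    (H 2 0 (by lia) (by lia) (by lia) (by lia) (by lia) (by lia))
  have key : ∀ j, 4 ≤ j → j < 11 → ∃ b c : Fin 4, ∃ s : F, s ≠ 0 ∧
      Matrix.vecMul (v j) A = s • decv w (1, b, c) := by
    intro j h4 h11
    have h := mul_ne_zero (H 1 j (by lia) h11 (by lia) (by lia) (by lia) (by lia)) hA
    rw [← d_vecMul, e1, e2] at h
    set x := Matrix.vecMul (v j) A
    have hx : x 0 ≠ 0 := by
      intro h0
      apply h
      simp [d_eq, h0]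
    obtain ⟨b, hb⟩ := hsurj (x 1 / x 0)
    obtain ⟨c, hc⟩ := hsurj (x 2 / x 0)
    refine ⟨b, c, x 0, hx, ?_⟩
    ext k
    fin_cases k
    · simp [decv, dec]
    · simp [decv, hb]; field_simp
    · simp [decv, hc]; field_simp
  obtain ⟨b4, c4, r4, hr4, e4⟩ := key 4 (by lia) (by lia)
  obtain ⟨b5, c5, r5, hr5, e5⟩ := key 5 (by lia) (by lia)
  obtain ⟨b6, c6, r6, hr6, e6⟩ := key 6 (by lia) (by lia)
  obtain ⟨b7, c7, r7, hr7, e7⟩ := key 7 (by lia) (by lia)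
  obtain ⟨b8, c8, r8, hr8, e8⟩ := key 8 (by lia) (by lia)
  obtain ⟨b9, c9, r9, hr9, e9⟩ := key 9 (by lia) (by lia)
  obtain ⟨b, c, r, hr, e10⟩ := key 10 (by lia) (by lia)
  let q : ℕ → Code := fun j => [(1,0,0), (0,1,0), (0,0,1), (1,1,1), (1,b4,c4), (1,b5,c5),
    (1,b6,c6), (1,b7,c7), (1,b8,c8), (1,b9,c9), (1,b,c)].getD j (0,0,0)
  have Q : ∀ j, j < 11 → ∃ s : F, s ≠ 0 ∧ Matrix.vecMul (v j) A = s • decv w (q j) := by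
    intro j hj
    interval_cases j
    · exact ⟨r0, hr0, e0⟩
    · exact ⟨r1, hr1, e1⟩
    · exact ⟨r2, hr2, e2⟩
    · exact ⟨1, one_ne_zero, by rw [one_smul]; exact e3⟩
    · exact ⟨r4, hr4, e4⟩
    · exact ⟨r5, hr5, e5⟩
    · exact ⟨r6, hr6, e6⟩
    · exact ⟨r7, hr7, e7⟩
    · exact ⟨r8, hr8, e8⟩
    · exact ⟨r9, hr9, e9⟩
    · exact ⟨r, hr, e10⟩
  have T : ∀ i j : ℕ, i < 10 → j < 11 → j ≠ i → j ≠ i + 1 → ¬ (i = 0 ∧ j = 10) →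
      ¬ (i = 9 ∧ j = 0) → detT (q i) (q (i + 1)) (q j) ≠ 0 := by
    intro i j h1 h3 h4 h5 h6 h7 h0
    have h := mul_ne_zero (H i j h1 h3 h4 h5 h6 h7) hA
    obtain ⟨s, -, hs⟩ := Q i (by lia)
    obtain ⟨t, -, ht⟩ := Q (i + 1) (by lia)
    obtain ⟨u, -, hu⟩ := Q j h3
    rw [← d_vecMul, hs, ht, hu, d_smul, ← dec_det h2 w hw, h0] at h
    simp [dec] at h
  have T' : ∀ i j k : ℕ, k = i + 1 → i < 10 → j < 11 → j ≠ i → j ≠ i + 1 → ¬ (i = 0 ∧ j = 10) →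
      ¬ (i = 9 ∧ j = 0) → (detT (q i) (q k) (q j) != 0) = true := by
    intro i j k hk h1 h3 h4 h5 h6 h7
    subst hk
    simpa using T i j h1 h3 h4 h5 h6 h7
  obtain ⟨g4, g5, g6, g7, g8, g9, g10⟩ := good_of q T'
  have fin := search b4 c4 g4 b5 c5 g5 b6 c6 g6 b7 c7 g7 b8 c8 g8 b9 c9 g9 b c
  exact Bool.false_ne_true (fin.symm.trans g10)

theorem exists_omega (h2 : (2 : F) = 0) (hc : Nat.card F = 4) :
    ∃ w : F, w ^ 2 = w + 1 ∧ Function.Surjective (dec w) := by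
  classical
  have : Finite F := Nat.finite_of_card_ne_zero (by lia)
  have : Fintype F := Fintype.ofFinite F
  have hc' : Fintype.card F = 4 := by rw [← Nat.card_eq_fintype_card, hc]
  have hp : ∀ x : F, x = 0 ∨ x = 1 ∨ x ^ 2 = x + 1 := by
    intro x
    have h := FiniteField.pow_card x
    rw [hc'] at h
    have : x * ((x - 1) * (x ^ 2 - (x + 1))) = 0 := by
      linear_combination h + (x - x ^ 3) * h2
    rcases mul_eq_zero.1 this with h | h
    · exact Or.inl h
    rcases mul_eq_zero.1 h with h | h
    · exact Or.inr (Or.inl (sub_eq_zero.1 h))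
    · exact Or.inr (Or.inr (sub_eq_zero.1 h))
  have : ∃ w : F, w ∉ ({0, 1} : Finset F) := by
    by_contra! hh
    have h1 : Finset.univ ⊆ ({0, 1} : Finset F) := fun x _ => hh x
    have h3 := Finset.card_le_card h1
    have h4 : ({0, 1} : Finset F).card ≤ 2 := Finset.card_le_two
    rw [Finset.card_univ] at h3
    lia
  obtain ⟨w, hw⟩ := this
  have hw2 : w ^ 2 = w + 1 := by
    rcases hp w with h | h | h
    · simp [h] at hw
    · simp [h] at hw
    · exact h
  refine ⟨w, hw2, fun x => ?_⟩
  rcases hp x with h | h | h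
  · exact ⟨0, by simp [dec, h]⟩
  · exact ⟨1, by simp [dec, h]⟩
  · have : (x - w) * (x - (w + 1)) = 0 := by
      linear_combination h + hw2 + (-x * w + w + 1) * h2
    rcases mul_eq_zero.1 this with h | h
    · exact ⟨2, by simp [dec, sub_eq_zero.1 h]⟩
    · exact ⟨3, by simp [dec, sub_eq_zero.1 h]⟩

end field

theorem adj_next {x y : ProjPoint ⊕ ProjLine} (h : IncGraph.Adj x y) :
    (∃ p l, x = Sum.inl p ∧ y = Sum.inr l) ∨ (∃ p l, x = Sum.inr l ∧ y = Sum.inl p) := by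
  rcases x with p | l <;> rcases y with q | m
  · exact h.elim
  · exact Or.inl ⟨_, _, rfl, rfl⟩
  · exact Or.inr ⟨_, _, rfl, rfl⟩
  · exact h.elim

theorem cast_inj {m a b : ℕ} (h : (a : ZMod m) = (b : ZMod m)) (h1 : a < b + m) (h3 : b < a + m) :
    a = b := by
  have h4 := (ZMod.natCast_eq_natCast_iff a b m).1 h
  have h5 := Nat.modEq_iff_dvd.1 h4
  have h6 := Int.eq_zero_of_abs_lt_dvd h5 (by rw [abs_lt]; constructor <;> lia)
  lia

end PlaneFour

open PlaneFour in
/-- For every integer `n ≥ 10`, the incidence graph of points and lines of `ℙ²(𝔽₄)`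
contains no induced cycle of length `2n`. -/
theorem no_induced_cycle_of_length_ge_twenty (n : ℕ) (hn : 10 ≤ n) :
    ¬ ∃ c : ZMod (2 * n) → (ProjPoint ⊕ ProjLine), IsInducedCycle IncGraph (2 * n) c := by
  rintro ⟨c, -, hc⟩
  have step : ∀ k : ℕ, IncGraph.Adj (c (k : ZMod (2 * n))) (c ((k + 1 : ℕ) : ZMod (2 * n))) := by
    intro k
    rw [hc]
    left
    push_cast
    rfl
  obtain ⟨e, p0, he⟩ : ∃ e : ℕ, ∃ p0, c (e : ZMod (2 * n)) = Sum.inl p0 := by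
    rcases adj_next (step 0) with ⟨p, l, h, h'⟩ | ⟨p, l, h, h'⟩
    · exact ⟨0, p, h⟩
    · exact ⟨1, p, h'⟩
  have pts : ∀ k : ℕ, ∃ p, c ((2 * k + e : ℕ) : ZMod (2 * n)) = Sum.inl p := by
    intro k
    induction k with
    | zero => exact ⟨p0, by simpa using he⟩
    | succ k ih =>
      obtain ⟨p, hp⟩ := ih
      rcases adj_next (step (2 * k + e)) with ⟨q, l, h, h'⟩ | ⟨q, l, h, h'⟩
      · rcases adj_next (step (2 * k + e + 1)) with ⟨q', l', g, g'⟩ | ⟨q', l', g, g'⟩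
        · rw [h'] at g; cases g
        · exact ⟨q', by rw [← g']; congr 2; ring⟩
      · rw [hp] at h; cases h
  have lns : ∀ k : ℕ, ∃ l, c ((2 * k + e + 1 : ℕ) : ZMod (2 * n)) = Sum.inr l := by
    intro k
    obtain ⟨p, hp⟩ := pts k
    rcases adj_next (step (2 * k + e)) with ⟨q, l, h, h'⟩ | ⟨q, l, h, h'⟩
    · exact ⟨l, h'⟩
    · rw [hp] at h; cases h
  choose p hp using pts
  choose l hl using lns
  have inc : ∀ i j : ℕ, (p j).1 ≤ (l i).1 ↔
      (((2 * i + e + 1 : ℕ) : ZMod (2 * n)) = ((2 * j + e + 1 : ℕ) : ZMod (2 * n)) ∨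
       ((2 * j + e : ℕ) : ZMod (2 * n)) = ((2 * i + e + 2 : ℕ) : ZMod (2 * n))) := by
    intro i j
    have h := hc ((2 * j + e : ℕ) : ZMod (2 * n)) ((2 * i + e + 1 : ℕ) : ZMod (2 * n))
    rw [hp, hl] at h
    refine Iff.trans h ?_
    have h1 : ((2 * j + e : ℕ) : ZMod (2 * n)) + 1 = ((2 * j + e + 1 : ℕ) : ZMod (2 * n)) := by
      push_cast; ring
    have h3 : ((2 * i + e + 1 : ℕ) : ZMod (2 * n)) + 1 = ((2 * i + e + 2 : ℕ) : ZMod (2 * n)) := by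
      push_cast; ring
    rw [h1, h3]
  have inc0 : ∀ i, (p i).1 ≤ (l i).1 := fun i => (inc i i).2 (Or.inl rfl)
  have inc1 : ∀ i, (p (i + 1)).1 ≤ (l i).1 := fun i => (inc i (i + 1)).2 (Or.inr (by congr 1; ring))
  have ninc : ∀ i j, j < i + n → i + 1 < j + n → j ≠ i → j ≠ i + 1 → ¬ (p j).1 ≤ (l i).1 := by
    intro i j h1 h3 h4 h5 h
    rcases (inc i j).1 h with h | h
    · have := cast_inj h (by lia) (by lia)
      lia
    · have := cast_inj h (by lia) (by lia)
      lia
  have vec : ∀ k, ∃ v : V3, v ≠ 0 ∧ v ∈ (p k).1 ∧ ∀ S : Submodule F4 V3, v ∈ S → (p k).1 ≤ S := by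
    intro k
    obtain ⟨v, hv, hs⟩ := finrank_eq_one_iff'.1 (p k).2
    refine ⟨v.1, fun h => hv (Subtype.ext h), v.2, fun S hS x hx => ?_⟩
    obtain ⟨a, ha⟩ := hs ⟨x, hx⟩
    have : a • v.1 = x := congrArg Subtype.val ha
    rw [← this]
    exact S.smul_mem a hS
  choose v hv0 hvm hvS using vec
  have h2 : (2 : F4) = 0 := by
    have := CharP.cast_eq_zero F4 2
    exact_mod_cast this
  obtain ⟨w, hw, hsurj⟩ := exists_omega (F := F4) h2 (by
    rw [GaloisField.card 2 2 (by norm_num)]; norm_num)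
  refine no_path h2 w hw hsurj v ?_
  intro i j h1 h3 h4 h5 h6 h7 hd
  obtain ⟨a, ha, hz⟩ := Matrix.exists_vecMul_eq_zero_iff.2 hd
  have hz' : a 0 • v i + a 1 • v (i + 1) + a 2 • v j = 0 := by
    rw [← hz]
    ext k
    simp [Matrix.vecMul, dotProduct, Fin.sum_univ_three]
  by_cases a2 : a 2 = 0
  · by_cases a0 : a 0 = 0
    · rw [a0, a2, zero_smul, zero_smul, zero_add, add_zero] at hz'
      rcases smul_eq_zero.1 hz' with h | h
      · apply ha
        ext k
        fin_cases k
        · exact a0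
        · exact h
        · exact a2
      · exact hv0 _ h
    · rw [a2, zero_smul, add_zero] at hz'
      refine ninc (i + 1) i (by lia) (by lia) (by lia) (by lia) (hvS i _ ?_)
      rw [← Submodule.smul_mem_iff _ a0, eq_neg_of_add_eq_zero_left hz']
      exact Submodule.neg_mem _ (Submodule.smul_mem _ _ (inc0 _ (hvm _)))
  · refine ninc i j (by lia) (by lia) h4 h5 (hvS j _ ?_)
    rw [← Submodule.smul_mem_iff _ a2, eq_neg_of_add_eq_zero_right hz']
    exact Submodule.neg_mem _ (Submodule.add_mem _ (Submodule.smul_mem _ _ (inc0 _ (hvm _)))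
      (Submodule.smul_mem _ _ (inc1 _ (hvm _))))
end

section
/- Let ϱ ∈ 𝔽₄ satisfy ϱ² + ϱ + 1 = 0. Define nine points of ℙ²(𝔽₄), indexed cyclically by ℤ/9ℤ, by P₀ = [0:0:1], P₁ = [ϱ²:0:1], P₂ = [ϱ:1:1], P₃ = [ϱ²:1:1], P₄ = [ϱ:ϱ:1], P₅ = [ϱ²:ϱ:1], P₆ = [ϱ:ϱ²:1], P₇ = [1:ϱ²:1], P₈ = [0:1:0]. Then for all i, j ∈ ℤ/9ℤ with j ≠ i and j ≠ i+1, the three points P(i), P(i+1), P(j) are not collinear. -/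
/-- Three points of `ℙ²(𝔽₄)` (given as subspaces of `𝔽₄³`) are collinear if they are
contained in a common 2-dimensional linear subspace of `𝔽₄³`. -/
def Collin3 (p q r : Submodule F4 V3) : Prop :=
  ∃ L : Submodule F4 V3, Module.finrank F4 L = 2 ∧ p ≤ L ∧ q ≤ L ∧ r ≤ L

/-- The nine chosen vectors in `𝔽₄³`, spanning the nine points
`[0:0:1], [ϱ²:0:1], [ϱ:1:1], [ϱ²:1:1], [ϱ:ϱ:1], [ϱ²:ϱ:1], [ϱ:ϱ²:1], [1:ϱ²:1], [0:1:0]`. -/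
noncomputable def vecs (ϱ : F4) : ZMod 9 → V3 :=
  ![![0, 0, 1], ![ϱ ^ 2, 0, 1], ![ϱ, 1, 1], ![ϱ ^ 2, 1, 1], ![ϱ, ϱ, 1],
    ![ϱ ^ 2, ϱ, 1], ![ϱ, ϱ ^ 2, 1], ![1, ϱ ^ 2, 1], ![0, 1, 0]]

theorem det_zero_of_collin (u v w : V3)
    (h : Collin3 (Submodule.span F4 {u}) (Submodule.span F4 {v}) (Submodule.span F4 {w})) :
    (Matrix.of ![u, v, w]).det = 0 := by
  obtain ⟨L, hL, hu, hv, hw⟩ := h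
  rw [Submodule.span_singleton_le_iff_mem] at hu hv hw
  by_contra hd
  have hli : LinearIndependent F4 (![u, v, w] : Fin 3 → V3) :=
    Matrix.linearIndependent_rows_of_det_ne_zero hd
  have hm : ∀ k, (![u, v, w] : Fin 3 → V3) k ∈ L := by
    intro k; fin_cases k <;> assumption
  have h2 : LinearIndependent F4 (fun k => (⟨_, hm k⟩ : L)) :=
    LinearIndependent.of_comp L.subtype hli
  have := h2.fintype_card_le_finrank
  simp [hL] at this

/-- The nine points of `ℙ²(𝔽₄)` above, indexed cyclically by `ℤ/9ℤ`, form an 18-cycle: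
no `P i`, `P (i+1)`, `P j` with `j ≠ i`, `j ≠ i + 1` are collinear. -/
theorem nine_points_no_collinear_triple (ϱ : F4) (hϱ : ϱ ^ 2 + ϱ + 1 = 0) :
    ∀ i j : ZMod 9, j ≠ i → j ≠ i + 1 →
      ¬ Collin3 (Submodule.span F4 {vecs ϱ i}) (Submodule.span F4 {vecs ϱ (i + 1)})
        (Submodule.span F4 {vecs ϱ j}) := by
  intro i j hi hj h
  have hd := det_zero_of_collin _ _ _ h
  have h2 : (2 : F4) = 0 := CharTwo.two_eq_zero
  have h10 : (1 : F4) ≠ 0 := one_ne_zero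
  clear h
  have key : vecs ϱ (i + 1) = (![![ϱ ^ 2, 0, 1], ![ϱ, 1, 1], ![ϱ ^ 2, 1, 1], ![ϱ, ϱ, 1],
    ![ϱ ^ 2, ϱ, 1], ![ϱ, ϱ ^ 2, 1], ![1, ϱ ^ 2, 1], ![0, 1, 0], ![0, 0, 1]] : Fin 9 → V3) i := by
    change Fin 9 at i
    fin_cases i <;> rfl
  rw [key] at hd
  clear key
  rw [Matrix.det_fin_three] at hd
  change Fin 9 at i j
  fin_cases i <;> fin_cases j <;>
    first
    | exact absurd rfl hi
    | exact absurd rfl hj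
    | (clear hi hj
       change _ = (0 : F4) at hd
       simp [vecs, Matrix.of_apply] at hd
       try grind)
end

section
/- The incidence graph of points and lines of ℙ²(𝔽₄) contains no induced subgraph isomorphic to the extended Dynkin diagram D̃₁₄, and no induced subgraph isomorphic to the extended Dynkin diagram D̃₁₈. -/
/-- The (oriented) edges of the extended Dynkin diagram `D̃ₙ` on `{0, 1, …, n}`:
`{0,2}`, `{1,2}`, `{i,i+1}` for `2 ≤ i ≤ n-3`, `{n-2,n-1}` and `{n-2,n}`. -/
def DTAdj (n : ℕ) (a b : ℕ) : Prop :=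
  (a = 0 ∧ b = 2) ∨ (a = 1 ∧ b = 2) ∨ (2 ≤ a ∧ a ≤ n - 3 ∧ b = a + 1) ∨
    (a = n - 2 ∧ b = n - 1) ∨ (a = n - 2 ∧ b = n)

/-- The extended Dynkin diagram `D̃ₙ` as a simple graph on `n + 1` vertices.
(For `n ≥ 4` the vertices occurring in `DTAdj` are always distinct, so the
`a ≠ b` conjunct is redundant; it merely makes the graph loopless for all `n`.) -/
def DTilde (n : ℕ) : SimpleGraph (Fin (n + 1)) where
  Adj a b := a ≠ b ∧ (DTAdj n a.1 b.1 ∨ DTAdj n b.1 a.1)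
  symm := ⟨fun _ _ h => ⟨h.1.symm, h.2.symm⟩⟩
  loopless := ⟨fun _ h => h.1 rfl⟩

/-- A simple graph `G` contains an induced subgraph isomorphic to `H` if there is an
injective map on vertices transporting adjacency in `H` exactly to adjacency in `G`. -/
def HasInducedCopy {α β : Type*} (H : SimpleGraph α) (G : SimpleGraph β) : Prop :=
  ∃ f : α → β, Function.Injective f ∧ ∀ a b : α, G.Adj (f a) (f b) ↔ H.Adj a b

namespace DT

/-! ### A concrete model of the field with four elements -/

def addF (a b : Fin 4) : Fin 4 := Fin.ofNat 4 (458142180 >>> (2 * (4 * a.1 + b.1)))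

/-- Multiplication table of `{0, 1, ω, ω + 1}`, packed in base four. -/
def mulF (a b : Fin 4) : Fin 4 := Fin.ofNat 4 (2625168384 >>> (2 * (4 * a.1 + b.1)))

theorem exists_model : ∃ e : Fin 4 → F4, Function.Bijective e ∧ e 0 = 0 ∧ e 1 = 1 ∧
    ∃ x : F4, e 2 = x ∧ e 3 = x + 1 ∧ x * x = x + 1 := by
  have hcard : Nat.card F4 = 4 := by
    have := GaloisField.card 2 2 (by norm_num)
    simpa using this
  have : Fintype F4 := Fintype.ofFinite _
  have hc : Fintype.card F4 = 4 := by rw [← Nat.card_eq_fintype_card]; exact hcard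
  classical
  obtain ⟨x, hx⟩ : ∃ x : F4, x ∉ ({0, 1} : Finset F4) := by
    by_contra! h
    have h1 : (Finset.univ : Finset F4) ⊆ {0, 1} := fun y _ => h y
    have h2 := Finset.card_le_card h1
    have h3 : ({0, 1} : Finset F4).card ≤ 2 := Finset.card_le_two
    rw [Finset.card_univ, hc] at h2
    omega
  simp only [Finset.mem_insert, Finset.mem_singleton, not_or] at hx
  obtain ⟨hx0, hx1⟩ := hx
  have h2 : (2 : F4) = 0 := by
    have := CharP.cast_eq_zero F4 2
    exact_mod_cast this
  have hp : x ^ 4 = x := by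
    have := FiniteField.pow_card x
    rwa [hc] at this
  have hxx : x * x = x + 1 := by
    have h3 : x * ((x - 1) * (x * x + x + 1)) = 0 := by linear_combination hp
    have h4 := (mul_eq_zero.1 h3).resolve_left hx0
    have h5 := (mul_eq_zero.1 h4).resolve_left (sub_ne_zero.2 hx1)
    linear_combination h5 - (x + 1) * h2
  have hx2 : x + 1 ≠ 0 := fun h => hx1 (by linear_combination h - h2)
  refine ⟨![0, 1, x, x + 1], ?_, rfl, rfl, x, rfl, rfl, hxx⟩
  refine Function.Injective.bijective_of_nat_card_le ?_ (by rw [hcard]; simp)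
  intro i j h
  clear hp hxx h2
  fin_cases i <;> fin_cases j <;> first | rfl | (exfalso; simp at h; first | done | grind)

theorem exists_model' : ∃ e : Fin 4 → F4, Function.Bijective e ∧ e 0 = 0 ∧ e 1 = 1 ∧
    (∀ a b, e (addF a b) = e a + e b) ∧ (∀ a b, e (mulF a b) = e a * e b) := by
  obtain ⟨e, he, h0, h1, x, h2, h3, hx⟩ := exists_model
  have h22 : (2 : F4) = 0 := by
    have := CharP.cast_eq_zero F4 2
    exact_mod_cast this
  refine ⟨e, he, h0, h1, ?_, ?_⟩
  · intro a b
    fin_cases a <;> fin_cases b <;> simp [addF, h0, h1, h2, h3] <;> grind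
  · intro a b
    fin_cases a <;> fin_cases b <;> simp [mulF, h0, h1, h2, h3] <;> grind

end DT
namespace DT

/-! ### Coordinates for points and lines -/

theorem point_rep (p : ProjPoint) : ∃ v : V3, v ≠ 0 ∧ p.1 = Submodule.span F4 {v} := by
  obtain ⟨v, hv, h⟩ := finrank_eq_one_iff'.1 p.2
  refine ⟨v.1, fun h0 => hv (Subtype.ext h0), le_antisymm ?_ ?_⟩
  · intro x hx
    obtain ⟨c, hc⟩ := h ⟨x, hx⟩
    rw [Submodule.mem_span_singleton]
    exact ⟨c, congrArg Subtype.val hc⟩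
  · rw [Submodule.span_singleton_le_iff_mem]
    exact v.2

theorem line_rep (l : ProjLine) : ∃ w : V3, w ≠ 0 ∧ ∀ x : V3, x ∈ l.1 ↔ x ⬝ᵥ w = 0 := by
  have hlt : l.1 < ⊤ := by
    rw [lt_top_iff_ne_top]
    intro h
    have h2 := l.2
    rw [h, finrank_top] at h2
    simp at h2
  obtain ⟨f, hf, hle⟩ := Submodule.exists_le_ker_of_lt_top _ hlt
  have hfx : ∀ x : V3, f x = x ⬝ᵥ (fun i => f (Pi.single i 1)) := by
    intro x
    have := LinearMap.pi_apply_eq_sum_univ f x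
    rw [this, dotProduct]
    refine Finset.sum_congr rfl fun i _ => ?_
    rw [smul_eq_mul]
    congr 2
    ext j
    simp [Pi.single_apply, eq_comm]
  have hk : Module.finrank F4 (LinearMap.ker f) = 2 := by
    have h1 := LinearMap.finrank_range_add_finrank_ker f
    have h2 : LinearMap.range f = ⊤ :=
      LinearMap.range_eq_top.2 (LinearMap.surjective hf)
    rw [h2, finrank_top] at h1
    simp at h1
    omega
  have heq : l.1 = LinearMap.ker f :=
    Submodule.eq_of_le_of_finrank_eq hle (by rw [hk]; exact l.2)
  refine ⟨fun i => f (Pi.single i 1), ?_, ?_⟩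
  · intro h0
    apply hf
    refine LinearMap.ext fun x => ?_
    rw [hfx x, h0]
    simp
  · intro x
    rw [heq, LinearMap.mem_ker, hfx x]

theorem rep : ∃ g : ProjPoint ⊕ ProjLine → V3, (∀ x, g x ≠ 0) ∧
    (∀ x y, IncGraph.Adj x y ↔ (x.isLeft ≠ y.isLeft ∧ g x ⬝ᵥ g y = 0)) ∧
    (∀ x y, x.isLeft = y.isLeft → ∀ c : F4, c ≠ 0 → g x = c • g y → x = y) := by
  choose gp hp0 hp using point_rep
  choose gl hl0 hl using line_rep
  have key : ∀ p l, p.1 ≤ l.1 ↔ gp p ⬝ᵥ gl l = 0 := by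
    intro p l
    rw [hp p, Submodule.span_singleton_le_iff_mem, hl]
  refine ⟨Sum.elim gp gl, ?_, ?_, ?_⟩
  · rintro (x | x)
    · exact hp0 x
    · exact hl0 x
  · rintro (x | x) (y | y)
    · simp [IncGraph, IncAdj]
    · simp [IncGraph, IncAdj, key]
    · simp [IncGraph, IncAdj, key, dotProduct_comm]
    · simp [IncGraph, IncAdj]
  · rintro (x | x) (y | y) hs c hc h
    · simp only [Sum.elim_inl] at h
      congr 1
      apply Subtype.ext
      rw [hp x, hp y, h]
      exact Submodule.span_singleton_smul_eq (IsUnit.mk0 c hc) _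
    · simp at hs
    · simp at hs
    · simp only [Sum.elim_inr] at h
      congr 1
      apply Subtype.ext
      ext z
      rw [hl x, hl y, h, dotProduct_smul, smul_eq_mul, mul_eq_zero]
      simp [hc]

/-! ### Normalizing a frame -/

theorem frame {K : Type*} [Field K] (v0 v1 v2 v3 b0 b1 b2 : Fin 3 → K)
    (h00 : v0 ⬝ᵥ b0 = 0) (h10 : v1 ⬝ᵥ b0 = 0) (h20 : v2 ⬝ᵥ b0 ≠ 0) (h30 : v3 ⬝ᵥ b0 ≠ 0)
    (h01 : v0 ⬝ᵥ b1 ≠ 0) (h11 : v1 ⬝ᵥ b1 = 0) (h21 : v2 ⬝ᵥ b1 = 0) (h31 : v3 ⬝ᵥ b1 ≠ 0)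
    (h02 : v0 ⬝ᵥ b2 ≠ 0) (h12 : v1 ⬝ᵥ b2 ≠ 0) (h22 : v2 ⬝ᵥ b2 = 0) (h32 : v3 ⬝ᵥ b2 = 0) :
    ∃ φ ψ : (Fin 3 → K) →ₗ[K] (Fin 3 → K), (∀ x y, φ x ⬝ᵥ ψ y = x ⬝ᵥ y) ∧
      (∃ c, φ v0 = ![c, 0, 0]) ∧ (∃ c, φ v1 = ![0, c, 0]) ∧ (∃ c, φ v2 = ![0, 0, c]) ∧
      φ v3 = ![1, 1, 1] := by
  have hli : LinearIndependent K ![v0, v1, v2] := by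
    rw [Fintype.linearIndependent_iff]
    intro g hg
    simp only [Fin.sum_univ_three, Matrix.cons_val_zero, Matrix.cons_val_one,
      Matrix.cons_val] at hg
    have e0 := congrArg (· ⬝ᵥ b0) hg
    have e1 := congrArg (· ⬝ᵥ b1) hg
    have e2 := congrArg (· ⬝ᵥ b2) hg
    simp [add_dotProduct, smul_dotProduct, h00, h10, h11, h21, h22, h20, h01] at e0 e1 e2
    simp [e1, h12] at e2
    intro i
    fin_cases i <;> simp [e0, e1, e2]
  let B := basisOfLinearIndependentOfCardEqFinrank hli (by simp)
  have hB : ∀ i, B i = ![v0, v1, v2] i := fun i => by simp [B]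
  have hv3 := B.sum_equivFun v3
  set c := B.equivFun v3 with hc
  simp only [Fin.sum_univ_three, hB, Matrix.cons_val_zero, Matrix.cons_val_one,
      Matrix.cons_val] at hv3
  rw [← hv3] at h30 h31 h32
  simp only [add_dotProduct, smul_dotProduct, h00, h10, h11, h21, h22, smul_eq_mul, mul_zero,
    zero_add, add_zero] at h30 h31 h32
  have hc2 : c 2 ≠ 0 := left_ne_zero_of_mul h30
  have hc0 : c 0 ≠ 0 := left_ne_zero_of_mul h31
  have hc1 : c 1 ≠ 0 := by
    intro h
    rw [h, zero_mul, add_zero] at h32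
    exact mul_ne_zero hc0 h02 h32
  have hcn : ∀ i, c i ≠ 0 := by
    intro i
    fin_cases i <;> assumption
  refine ⟨LinearMap.pi fun i => (c i)⁻¹ • (LinearMap.proj i ∘ₗ B.equivFun.toLinearMap),
    LinearMap.pi fun i => c i • (dotProductBilin K K (B i)), ?_, ?_, ?_, ?_, ?_⟩
  · intro x y
    conv_rhs => rw [← B.sum_equivFun x, sum_dotProduct]
    refine Finset.sum_congr rfl fun i _ => ?_
    simp [smul_dotProduct]
    field_simp [hcn i]
  · refine ⟨(c 0)⁻¹, ?_⟩
    have := hB 0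
    simp only [Matrix.cons_val_zero] at this
    rw [← this]
    ext i
    fin_cases i <;> simp
  · refine ⟨(c 1)⁻¹, ?_⟩
    have := hB 1
    simp only [Matrix.cons_val_one, Matrix.cons_val_zero] at this
    rw [← this]
    ext i
    fin_cases i <;> simp
  · refine ⟨(c 2)⁻¹, ?_⟩
    have := hB 2
    simp only [Matrix.cons_val] at this
    rw [← this]
    ext i
    fin_cases i <;> simp
  · ext i
    have h1 : (c i)⁻¹ * c i = 1 := inv_mul_cancel₀ (hcn i)
    fin_cases i <;> simpa [hc] using h1

end DT
namespace DT

/-! ### The 21 normalized vectors -/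

/-- The 21 by 21 incidence matrix, packed in one number. -/
def tab : ℕ := 189281089038996197039222210811074444015977896194130294796281747093685540932277847999097674660039923088888450458385015832930844344320

/-- Orthogonality of the `i`-th and the `j`-th normalized vector. -/
def inc (i j : Fin 21) : Bool := Nat.testBit tab (21 * i.1 + j.1)

def divF (a b : Fin 4) : Fin 4 := mulF a (mulF b b)

/-- The number of the normalized vector proportional to `(a, b, c)`. -/
def idxF (a b c : Fin 4) : Fin 21 :=
  if a ≠ 0 then Fin.ofNat 21 (4 * (divF b a).1 + (divF c a).1)
  else if b ≠ 0 then Fin.ofNat 21 (16 + (divF c b).1)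
  else 20

theorem idxF_inc : ∀ a b c x y z : Fin 4, ¬(a = 0 ∧ b = 0 ∧ c = 0) → ¬(x = 0 ∧ y = 0 ∧ z = 0) →
    (inc (idxF a b c) (idxF x y z) = true ↔
      addF (addF (mulF a x) (mulF b y)) (mulF c z) = 0) := by
  decide +kernel

theorem idxF_inj : ∀ a b c x y z : Fin 4, ¬(a = 0 ∧ b = 0 ∧ c = 0) → ¬(x = 0 ∧ y = 0 ∧ z = 0) →
    idxF a b c = idxF x y z → ∃ k, k ≠ 0 ∧ a = mulF k x ∧ b = mulF k y ∧ c = mulF k z := by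
  decide +kernel

theorem idxF_frame : (∀ c : Fin 4, c ≠ 0 → idxF c 0 0 = 0 ∧ idxF 0 c 0 = 16 ∧ idxF 0 0 c = 20) ∧
    idxF 1 1 1 = 5 := by
  decide +kernel

theorem exists_idx : ∃ idx : V3 → Fin 21,
    (∀ x y, x ≠ 0 → y ≠ 0 → (inc (idx x) (idx y) = true ↔ x ⬝ᵥ y = 0)) ∧
    (∀ x y, x ≠ 0 → y ≠ 0 → idx x = idx y → ∃ c : F4, c ≠ 0 ∧ x = c • y) ∧
    (∀ c : F4, c ≠ 0 → idx ![c, 0, 0] = 0 ∧ idx ![0, c, 0] = 16 ∧ idx ![0, 0, c] = 20) ∧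
    idx ![1, 1, 1] = 5 := by
  obtain ⟨e, he, h0, h1, hadd, hmul⟩ := exists_model'
  obtain ⟨E, hE1, hE2⟩ := Function.bijective_iff_has_inverse.1 he
  have E0 : E 0 = 0 := by rw [← h0, hE1]
  have E1 : E 1 = 1 := by rw [← h1, hE1]
  have Eadd : ∀ x y, E (x + y) = addF (E x) (E y) := by
    intro x y
    rw [← hE1 (addF (E x) (E y)), hadd, hE2, hE2]
  have Emul : ∀ x y, E (x * y) = mulF (E x) (E y) := by
    intro x y
    rw [← hE1 (mulF (E x) (E y)), hmul, hE2, hE2]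
  have Einj : Function.Injective E := hE2.injective
  have Ez : ∀ x, E x = 0 ↔ x = 0 := by
    intro x
    rw [← E0]
    exact Einj.eq_iff
  have nz : ∀ x : V3, x ≠ 0 → ¬(E (x 0) = 0 ∧ E (x 1) = 0 ∧ E (x 2) = 0) := by
    intro x hx h
    simp only [Ez] at h
    apply hx
    ext i
    fin_cases i
    · exact h.1
    · exact h.2.1
    · exact h.2.2
  refine ⟨fun x => idxF (E (x 0)) (E (x 1)) (E (x 2)), ?_, ?_, ?_, ?_⟩
  · intro x y hx hy
    rw [idxF_inc _ _ _ _ _ _ (nz x hx) (nz y hy), ← Emul, ← Emul, ← Emul, ← Eadd, ← Eadd, Ez,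
      dotProduct, Fin.sum_univ_three]
  · intro x y hx hy h
    obtain ⟨k, hk, ha, hb, hc⟩ := idxF_inj _ _ _ _ _ _ (nz x hx) (nz y hy) h
    rw [← hE1 k, ← Emul] at ha hb hc
    refine ⟨e k, fun h => hk (he.1 (h.trans h0.symm)), ?_⟩
    ext i
    fin_cases i
    · exact Einj ha
    · exact Einj hb
    · exact Einj hc
  · intro c hc
    have := idxF_frame.1 (E c) (fun h => hc ((Ez c).1 h))
    simpa [E0] using this
  · simpa [E1] using idxF_frame.2

/-! ### The search -/

/-- Some vector is orthogonal to `x` and `y` and to nothing else in `S`. -/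
def hasJoint (S : List (Fin 21)) (x y : Fin 21) : Bool :=
  (List.finRange 21).any fun p => S.all fun z => inc z p == (z == x || z == y)

/-- Two vectors are orthogonal to `x` and to nothing else in `S`. -/
def hasLeaves (S : List (Fin 21)) (x : Fin 21) : Bool :=
  (List.finRange 21).any fun p => (S.all fun z => inc z p == (z == x)) &&
    (List.finRange 21).any fun q => p != q && S.all fun z => inc z q == (z == x)

def okList (S : List (Fin 21)) : Bool :=
  decide S.Nodup && (S.zip S.tail).all (fun w => hasJoint S w.1 w.2) && hasLeaves S 0

def search : ℕ → List (Fin 21) → Bool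
  | 0, l => hasLeaves l (l.getLastD 0)
  | n + 1, l => (List.finRange 21).any fun x => okList (l ++ [x]) && search n (l ++ [x])

theorem search_two : search 2 [0, 16, 20, 5] = false := by decide +kernel

theorem search_four : search 4 [0, 16, 20, 5] = false := by decide +kernel

theorem search_sound (m : ℕ) (hm : 4 ≤ m) (a b : ℕ → Fin 21) (c c' d d' : Fin 21)
    (hb : ∀ j < m, ∀ i, i + 1 < m → (inc (a j) (b i) = true ↔ j = i ∨ j = i + 1))
    (hc : ∀ j < m, (inc (a j) c = true ↔ j = 0)) (hc' : ∀ j < m, (inc (a j) c' = true ↔ j = 0))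
    (hd : ∀ j < m, (inc (a j) d = true ↔ j + 1 = m))
    (hd' : ∀ j < m, (inc (a j) d' = true ↔ j + 1 = m)) (hcc : c ≠ c') (hdd : d ≠ d')
    (h0 : a 0 = 0) (h1 : a 1 = 16) (h2 : a 2 = 20) (h3 : a 3 = 5) :
    search (m - 4) [0, 16, 20, 5] = true := by
  have hlt : ∀ i j, i < j → j < m → a i ≠ a j := by
    intro i j hij hj h
    rcases Nat.eq_zero_or_pos i with rfl | hi
    · have e1 := (hc 0 (by omega)).2 rfl
      rw [h] at e1
      have := (hc j hj).1 e1
      omega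
    · obtain ⟨i, rfl⟩ : ∃ i', i = i' + 1 := ⟨i - 1, by omega⟩
      have e1 := (hb (i + 1) (by omega) i (by omega)).2 (Or.inr rfl)
      rw [h] at e1
      have := (hb j hj i (by omega)).1 e1
      omega
  have hinj : ∀ i < m, ∀ j < m, (a i = a j ↔ i = j) := by
    intro i hi j hj
    refine ⟨fun h => ?_, fun h => by rw [h]⟩
    rcases lt_trichotomy i j with h' | h' | h'
    · exact absurd h (hlt i j h' hj)
    · exact h'
    · exact absurd h.symm (hlt j i h' hi)
  have joint : ∀ k ≤ m, ∀ i, i + 1 < k →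
      hasJoint ((List.range k).map a) (a i) (a (i + 1)) = true := by
    intro k hk i hi
    simp only [hasJoint, List.any_eq_true, List.all_eq_true, List.mem_finRange, true_and,
      List.mem_map, List.mem_range]
    refine ⟨b i, ?_⟩
    rintro z ⟨j, hj, rfl⟩
    rw [beq_iff_eq, Bool.eq_iff_iff, hb j (by omega) i (by omega), Bool.or_eq_true, beq_iff_eq,
      beq_iff_eq, hinj j (by omega) i (by omega), hinj j (by omega) (i + 1) (by omega)]
  have leaves : ∀ k ≤ m, ∀ i < m, ∀ p q, p ≠ q → (∀ j < m, (inc (a j) p = true ↔ j = i)) →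
      (∀ j < m, (inc (a j) q = true ↔ j = i)) →
      hasLeaves ((List.range k).map a) (a i) = true := by
    intro k hk i hi p q hpq hp hq
    simp only [hasLeaves, List.any_eq_true, List.all_eq_true, List.mem_finRange, true_and,
      List.mem_map, List.mem_range, Bool.and_eq_true]
    refine ⟨p, ?_, q, by simpa using hpq, ?_⟩
    · rintro z ⟨j, hj, rfl⟩
      rw [beq_iff_eq, Bool.eq_iff_iff, hp j (by omega), beq_iff_eq, hinj j (by omega) i hi]
    · rintro z ⟨j, hj, rfl⟩
      rw [beq_iff_eq, Bool.eq_iff_iff, hq j (by omega), beq_iff_eq, hinj j (by omega) i hi]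
  have ok : ∀ k ≤ m, okList ((List.range k).map a) = true := by
    intro k hk
    simp only [okList, Bool.and_eq_true, decide_eq_true_eq, List.all_eq_true]
    refine ⟨⟨?_, ?_⟩, ?_⟩
    · refine List.Nodup.map_on ?_ List.nodup_range
      intro x hx y hy h
      rw [List.mem_range] at hx hy
      exact (hinj x (by omega) y (by omega)).1 h
    · intro w hw
      obtain ⟨i, hi, rfl⟩ := List.mem_iff_getElem.1 hw
      simp at hi
      simp only [List.getElem_zip, List.getElem_tail, List.getElem_map, List.getElem_range]
      exact joint k hk i (by omega)
    · rw [← h0]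
      exact leaves k hk 0 (by omega) c c' hcc hc hc'
  have main : ∀ j k, k + j = m → 4 ≤ k → search j ((List.range k).map a) = true := by
    intro j
    induction j with
    | zero =>
      intro k hk hk4
      obtain ⟨k, rfl⟩ : ∃ k', k = k' + 1 := ⟨k - 1, by omega⟩
      have e1 : ((List.range (k + 1)).map a).getLastD 0 = a k := by
        rw [List.range_succ, List.map_append]
        simp
      rw [search, e1]
      refine leaves (k + 1) (by omega) k (by omega) d d' hdd ?_ ?_
      · intro j hj
        rw [hd j hj]
        omega
      · intro j hj
        rw [hd' j hj]
        omega
    | succ j ih =>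
      intro k hk hk4
      rw [search, List.any_eq_true]
      have e1 : (List.range k).map a ++ [a k] = (List.range (k + 1)).map a := by
        rw [List.range_succ, List.map_append]
        simp
      refine ⟨a k, List.mem_finRange _, ?_⟩
      rw [e1, ok (k + 1) (by omega), ih (k + 1) (by omega) (by omega)]
      rfl
  have := main (m - 4) 4 (by omega) le_rfl
  simpa [List.range_succ, h0, h1, h2, h3] using this

/-! ### Reduction of an induced copy to the search -/

theorem reduction (m : ℕ) (hm : 4 ≤ m) (h : HasInducedCopy (DTilde (2 * m + 2)) IncGraph) :
    search (m - 4) [0, 16, 20, 5] = true := by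
  obtain ⟨f, finj, hf⟩ := h
  obtain ⟨g, g0, gadj, ginj⟩ := rep
  obtain ⟨idx, idx_inc, idx_inj, idx_frame, idx_one⟩ := exists_idx
  let F : ℕ → ProjPoint ⊕ ProjLine := fun k => f (Fin.ofNat (2 * m + 2 + 1) k)
  have val : ∀ i ≤ 2 * m + 2, (Fin.ofNat (2 * m + 2 + 1) i).1 = i := fun i hi =>
    Nat.mod_eq_of_lt (by omega)
  have Finj : ∀ i ≤ 2 * m + 2, ∀ j ≤ 2 * m + 2, F i = F j → i = j := by
    intro i hi j hj h
    have := congrArg Fin.val (finj h)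
    rwa [val i hi, val j hj] at this
  have Fadj : ∀ i ≤ 2 * m + 2, ∀ j ≤ 2 * m + 2, (((F i).isLeft ≠ (F j).isLeft ∧
      g (F i) ⬝ᵥ g (F j) = 0) ↔ i ≠ j ∧ (DTAdj (2 * m + 2) i j ∨ DTAdj (2 * m + 2) j i)) := by
    intro i hi j hj
    rw [← gadj, hf]
    simp only [DTilde, val i hi, val j hj, ne_eq, Fin.ext_iff]
  have step : ∀ i ≤ 2 * m + 2, ∀ j ≤ 2 * m + 2, i ≠ j → DTAdj (2 * m + 2) i j →
      (F i).isLeft = !(F j).isLeft := by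
    intro i hi j hj hij h
    have := ((Fadj i hi j hj).2 ⟨hij, Or.inl h⟩).1
    revert this
    cases (F i).isLeft <;> cases (F j).isLeft <;> simp
  have side : ∀ k < m, (F (2 * k + 2)).isLeft = (F 2).isLeft := by
    intro k
    induction k with
    | zero => intro _; rfl
    | succ k ih =>
      intro hk
      rw [← ih (by omega), step (2 * k + 2) (by omega) (2 * k + 3) (by omega) (by omega)
        (by unfold DTAdj; omega), step (2 * k + 3) (by omega) (2 * (k + 1) + 2) (by omega)
        (by omega) (by unfold DTAdj; omega), Bool.not_not]
  have sideb : ∀ k, k + 1 < m → (F (2 * k + 3)).isLeft = !(F 2).isLeft := by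
    intro k hk
    rw [← side k (by omega), step (2 * k + 2) (by omega) (2 * k + 3) (by omega) (by omega)
        (by unfold DTAdj; omega), Bool.not_not]
  have sidec : (F 0).isLeft = !(F 2).isLeft :=
    step 0 (by omega) 2 (by omega) (by omega) (by unfold DTAdj; omega)
  have sidec' : (F 1).isLeft = !(F 2).isLeft :=
    step 1 (by omega) 2 (by omega) (by omega) (by unfold DTAdj; omega)
  have sided : (F (2 * m + 1)).isLeft = !(F 2).isLeft := by
    rw [← side (m - 1) (by omega), step (2 * (m - 1) + 2) (by omega) (2 * m + 1) (by omega)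
      (by omega) (by unfold DTAdj; omega), Bool.not_not]
  have sided' : (F (2 * m + 2)).isLeft = !(F 2).isLeft := by
    rw [← side (m - 1) (by omega), step (2 * (m - 1) + 2) (by omega) (2 * m + 2) (by omega)
      (by omega) (by unfold DTAdj; omega), Bool.not_not]
  have dot : ∀ k < m, ∀ t ≤ 2 * m + 2, (F t).isLeft = (!(F 2).isLeft) →
      (g (F (2 * k + 2)) ⬝ᵥ g (F t) = 0 ↔ 2 * k + 2 ≠ t ∧
        (DTAdj (2 * m + 2) (2 * k + 2) t ∨ DTAdj (2 * m + 2) t (2 * k + 2))) := by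
    intro k hk t ht hs
    rw [← Fadj (2 * k + 2) (by omega) t ht, side k hk, hs]
    cases (F 2).isLeft <;> simp
  have db : ∀ j < m, ∀ i, i + 1 < m →
      (g (F (2 * j + 2)) ⬝ᵥ g (F (2 * i + 3)) = 0 ↔ j = i ∨ j = i + 1) := by
    intro j hj i hi
    rw [dot j hj (2 * i + 3) (by omega) (sideb i hi)]
    unfold DTAdj
    omega
  have dc : ∀ j < m, (g (F (2 * j + 2)) ⬝ᵥ g (F 0) = 0 ↔ j = 0) := by
    intro j hj
    rw [dot j hj 0 (by omega) sidec]
    unfold DTAdj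
    omega
  have dc' : ∀ j < m, (g (F (2 * j + 2)) ⬝ᵥ g (F 1) = 0 ↔ j = 0) := by
    intro j hj
    rw [dot j hj 1 (by omega) sidec']
    unfold DTAdj
    omega
  have dd : ∀ j < m, (g (F (2 * j + 2)) ⬝ᵥ g (F (2 * m + 1)) = 0 ↔ j + 1 = m) := by
    intro j hj
    rw [dot j hj (2 * m + 1) (by omega) sided]
    unfold DTAdj
    omega
  have dd' : ∀ j < m, (g (F (2 * j + 2)) ⬝ᵥ g (F (2 * m + 2)) = 0 ↔ j + 1 = m) := by
    intro j hj
    rw [dot j hj (2 * m + 2) (by omega) sided']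
    unfold DTAdj
    omega
  have dbz : ∀ j < m, ∀ i, i + 1 < m → (j = i ∨ j = i + 1) →
      g (F (2 * j + 2)) ⬝ᵥ g (F (2 * i + 3)) = 0 := fun j hj i hi h => (db j hj i hi).2 h
  have dbn : ∀ j < m, ∀ i, i + 1 < m → ¬(j = i ∨ j = i + 1) →
      g (F (2 * j + 2)) ⬝ᵥ g (F (2 * i + 3)) ≠ 0 := fun j hj i hi h h' => h ((db j hj i hi).1 h')
  obtain ⟨φ, ψ, hφψ, ⟨c0, hc0⟩, ⟨c1, hc1⟩, ⟨c2, hc2⟩, hone⟩ := frame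
    (g (F (2 * 0 + 2))) (g (F (2 * 1 + 2))) (g (F (2 * 2 + 2))) (g (F (2 * 3 + 2)))
    (g (F (2 * 0 + 3))) (g (F (2 * 1 + 3))) (g (F (2 * 2 + 3)))
    (dbz 0 (by omega) 0 (by omega) (by omega)) (dbz 1 (by omega) 0 (by omega) (by omega))
    (dbn 2 (by omega) 0 (by omega) (by omega)) (dbn 3 (by omega) 0 (by omega) (by omega))
    (dbn 0 (by omega) 1 (by omega) (by omega)) (dbz 1 (by omega) 1 (by omega) (by omega))
    (dbz 2 (by omega) 1 (by omega) (by omega)) (dbn 3 (by omega) 1 (by omega) (by omega))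
    (dbn 0 (by omega) 2 (by omega) (by omega)) (dbn 1 (by omega) 2 (by omega) (by omega))
    (dbz 2 (by omega) 2 (by omega) (by omega)) (dbz 3 (by omega) 2 (by omega) (by omega))
  have φ0 : ∀ x, x ≠ 0 → φ x ≠ 0 := by
    intro x hx h
    apply hx
    refine dotProduct_eq_zero x fun y => ?_
    rw [← hφψ, h, zero_dotProduct]
  have ψ0 : ∀ x, x ≠ 0 → ψ x ≠ 0 := by
    intro x hx h
    apply hx
    refine dotProduct_eq_zero x fun y => ?_
    rw [dotProduct_comm, ← hφψ, h, dotProduct_zero]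
  have pass : ∀ x y, inc (idx (φ (g x))) (idx (ψ (g y))) = true ↔ g x ⬝ᵥ g y = 0 := by
    intro x y
    rw [idx_inc _ _ (φ0 _ (g0 x)) (ψ0 _ (g0 y)), hφψ]
  have sep : ∀ i ≤ 2 * m + 2, ∀ j ≤ 2 * m + 2, (F i).isLeft = (F j).isLeft → i ≠ j →
      idx (ψ (g (F i))) ≠ idx (ψ (g (F j))) := by
    intro i hi j hj hs hij h
    obtain ⟨c, hc, hcc⟩ := idx_inj _ _ (ψ0 _ (g0 _)) (ψ0 _ (g0 _)) h
    rw [← map_smul] at hcc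
    have e1 : g (F i) = c • g (F j) := by
      by_contra hne
      apply ψ0 _ (sub_ne_zero.2 hne)
      rw [map_sub, hcc, sub_self]
    exact hij (Finj i hi j hj (ginj _ _ hs c hc e1))
  refine search_sound m hm (fun k => idx (φ (g (F (2 * k + 2)))))
    (fun k => idx (ψ (g (F (2 * k + 3))))) (idx (ψ (g (F 0)))) (idx (ψ (g (F 1))))
    (idx (ψ (g (F (2 * m + 1))))) (idx (ψ (g (F (2 * m + 2))))) ?_ ?_ ?_ ?_ ?_ ?_ ?_ ?_ ?_ ?_ ?_
  · intro j hj i hi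
    rw [pass, db j hj i hi]
  · intro j hj
    rw [pass, dc j hj]
  · intro j hj
    rw [pass, dc' j hj]
  · intro j hj
    rw [pass, dd j hj]
  · intro j hj
    rw [pass, dd' j hj]
  · exact sep 0 (by omega) 1 (by omega) (sidec.trans sidec'.symm) (by omega)
  · exact sep _ (by omega) _ (by omega) (sided.trans sided'.symm) (by omega)
  · have hne := φ0 _ (g0 (F (2 * 0 + 2)))
    rw [hc0] at hne
    change idx (φ (g (F (2 * 0 + 2)))) = 0
    rw [hc0]
    exact (idx_frame c0 (fun h => hne (by rw [h]; simp))).1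
  · have hne := φ0 _ (g0 (F (2 * 1 + 2)))
    rw [hc1] at hne
    change idx (φ (g (F (2 * 1 + 2)))) = 16
    rw [hc1]
    exact (idx_frame c1 (fun h => hne (by rw [h]; simp))).2.1
  · have hne := φ0 _ (g0 (F (2 * 2 + 2)))
    rw [hc2] at hne
    change idx (φ (g (F (2 * 2 + 2)))) = 20
    rw [hc2]
    exact (idx_frame c2 (fun h => hne (by rw [h]; simp))).2.2
  · rw [hone]
    exact idx_one

end DT

/-- The incidence graph of `ℙ²(𝔽₄)` contains no induced subgraph isomorphic to `D̃₁₄`,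
and none isomorphic to `D̃₁₈`. -/
theorem no_induced_DTilde_14_18 :
    ¬ HasInducedCopy (DTilde 14) IncGraph ∧ ¬ HasInducedCopy (DTilde 18) IncGraph := by
  constructor
  · intro h
    have := DT.reduction 6 (by norm_num) h
    rw [DT.search_two] at this
    exact Bool.false_ne_true this
  · intro h
    have := DT.reduction 8 (by norm_num) h
    rw [DT.search_four] at this
    exact Bool.false_ne_true this
end

section
/- On the Weierstrass curve W : y² + xy + t⁴y = x³ over the rational function field F = 𝔽₂(t), the point P = (t², t²) is a nonsingular point of order exactly 6 in the group of points of W; moreover 3P = (t⁴, t⁶) and 4P = (0, 0). -/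
/-- The rational function field `F = 𝔽₂(t)`. -/
noncomputable abbrev F : Type := RatFunc (ZMod 2)

/-- The variable `t` of `𝔽₂(t)`. -/
noncomputable def t : F := RatFunc.X

/-- The Weierstrass curve `W : y² + xy + t⁴y = x³` over `𝔽₂(t)`. -/
noncomputable def W : WeierstrassCurve.Affine F :=
  { a₁ := 1, a₂ := 0, a₃ := t ^ 4, a₄ := 0, a₆ := 0 }

lemma t_ne_zero' : t ≠ 0 := RatFunc.X_ne_zero

lemma two_F : (2 : F) = 0 := CharTwo.two_eq_zero

lemma t_add_one : t + 1 ≠ 0 := by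
  have h : (Polynomial.X + Polynomial.C 1 : Polynomial (ZMod 2)) ≠ 0 :=
    Polynomial.X_add_C_ne_zero 1
  intro h'
  apply h
  apply RatFunc.algebraMap_injective (ZMod 2)
  simpa [t, RatFunc.algebraMap_X] using h'

lemma hP_ns : W.Nonsingular (t ^ 2) (t ^ 2) := by
  rw [WeierstrassCurve.Affine.nonsingular_iff', WeierstrassCurve.Affine.equation_iff]
  simp only [W]
  refine ⟨by linear_combination t ^ 4 * two_F, Or.inr ?_⟩
  have h : t ^ 2 * (t + 1) ^ 2 ≠ 0 :=
    mul_ne_zero (pow_ne_zero _ t_ne_zero') (pow_ne_zero _ t_add_one)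
  intro h'
  apply h
  linear_combination h' + (t ^ 3 - t ^ 2) * two_F

lemma h3_ns : W.Nonsingular (t ^ 4) (t ^ 6) := by
  rw [WeierstrassCurve.Affine.nonsingular_iff', WeierstrassCurve.Affine.equation_iff]
  simp only [W]
  refine ⟨by linear_combination t ^ 10 * two_F, Or.inl ?_⟩
  have h : t ^ 6 * (t + 1) ^ 2 ≠ 0 :=
    mul_ne_zero (pow_ne_zero _ t_ne_zero') (pow_ne_zero _ t_add_one)
  intro h'
  apply h
  linear_combination h' + (t ^ 7 + 2 * t ^ 8) * two_F

lemma h4_ns : W.Nonsingular 0 0 := by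
  rw [WeierstrassCurve.Affine.nonsingular_zero]
  exact ⟨rfl, Or.inl (pow_ne_zero _ t_ne_zero')⟩

lemma h2_ns : W.Nonsingular 0 (t ^ 4) := by
  rw [WeierstrassCurve.Affine.nonsingular_iff', WeierstrassCurve.Affine.equation_iff]
  simp only [W]
  refine ⟨by linear_combination t ^ 8 * two_F, Or.inl ?_⟩
  simpa using t_ne_zero'

open WeierstrassCurve.Affine in
open scoped Classical in
lemma add_eq' {x₁ y₁ x₂ y₂ x₃ y₃ : F} (l : F) (h₁ : W.Nonsingular x₁ y₁)
    (h₂ : W.Nonsingular x₂ y₂) (h₃ : W.Nonsingular x₃ y₃)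
    (hxy : ¬(x₁ = x₂ ∧ y₁ = W.negY x₂ y₂)) (hl : W.slope x₁ x₂ y₁ y₂ = l)
    (hx : W.addX x₁ x₂ l = x₃) (hy : W.addY x₁ x₂ y₁ l = y₃) :
    Point.some _ _ h₁ + Point.some _ _ h₂ = Point.some _ _ h₃ := by
  subst hl hx hy
  exact Point.add_some hxy

open WeierstrassCurve.Affine in
open scoped Classical in
lemma dbl1 : Point.some _ _ hP_ns + Point.some _ _ hP_ns = Point.some _ _ h2_ns := by
  have h : t ^ 2 * (t + 1) ^ 2 ≠ 0 :=
    mul_ne_zero (pow_ne_zero _ t_ne_zero') (pow_ne_zero _ t_add_one)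
  have hn : t ^ 2 ≠ W.negY (t ^ 2) (t ^ 2) := by
    intro h'
    apply h
    simp only [negY, W] at h'
    linear_combination h' + (t ^ 3 - t ^ 2) * two_F
  refine add_eq' 1 _ _ _ (fun h => hn h.2) ?_ ?_ ?_
  · rw [slope_of_Y_ne rfl hn, div_eq_one_iff_eq (sub_ne_zero.2 hn)]
    simp only [negY, W]
    linear_combination (t ^ 4 - 2 * t ^ 2) * two_F
  · simp only [addX, W]
    linear_combination (1 - t ^ 2) * two_F
  · simp only [addY, negAddY, negY, addX, W]
    linear_combination (2 * t ^ 2 - t ^ 4 - 2) * two_F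

open WeierstrassCurve.Affine in
open scoped Classical in
lemma dbl2 : Point.some _ _ h2_ns + Point.some _ _ h2_ns = Point.some _ _ h4_ns := by
  have hn : t ^ 4 ≠ W.negY 0 (t ^ 4) := by
    intro h'
    apply pow_ne_zero 4 t_ne_zero'
    simp only [negY, W] at h'
    linear_combination h' - t ^ 4 * two_F
  refine add_eq' 1 _ _ _ (fun h => hn h.2) ?_ ?_ ?_
  · rw [slope_of_Y_ne rfl hn, div_eq_one_iff_eq (sub_ne_zero.2 hn)]
    simp only [negY, W]
    linear_combination (-2 * t ^ 4) * two_F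
  · simp only [addX, W]
    linear_combination two_F
  · simp only [addY, negAddY, negY, addX, W]
    linear_combination (-t ^ 4 - 2) * two_F

open WeierstrassCurve.Affine in
open scoped Classical in
lemma add21 : Point.some _ _ h2_ns + Point.some _ _ hP_ns = Point.some _ _ h3_ns := by
  have h2 : t ^ 2 ≠ 0 := pow_ne_zero _ t_ne_zero'
  have hn : (0 : F) ≠ t ^ 2 := h2.symm
  refine add_eq' (1 + t ^ 2) _ _ _ (fun h => hn h.1) ?_ ?_ ?_
  · rw [slope_of_X_ne hn, div_eq_iff (sub_ne_zero.2 hn)]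
    linear_combination t ^ 4 * two_F
  · simp only [addX, W]
    linear_combination (1 + t ^ 2) * two_F
  · simp only [addY, negAddY, negY, addX, W]
    linear_combination (-2 - 3 * t ^ 2 - 3 * t ^ 4 - t ^ 6) * two_F

open WeierstrassCurve.Affine in
open scoped Classical in
lemma dbl3 : Point.some _ _ h3_ns + Point.some _ _ h3_ns = 0 := by
  apply Point.add_self_of_Y_eq
  simp only [negY, W]
  linear_combination (t ^ 6 + t ^ 4) * two_F

open scoped Classical in
/-- On `W : y² + xy + t⁴y = x³` over `𝔽₂(t)`, the point `P = (t², t²)` is a nonsingular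
point of order exactly 6; moreover `3P = (t⁴, t⁶)` and `4P = (0, 0)`. -/
theorem point_t2_t2_has_order_six :
    ∃ (hP : W.Nonsingular (t ^ 2) (t ^ 2)) (h3 : W.Nonsingular (t ^ 4) (t ^ 6))
      (h4 : W.Nonsingular 0 0),
      addOrderOf (WeierstrassCurve.Affine.Point.some _ _ hP) = 6 ∧
        (3 : ℤ) • WeierstrassCurve.Affine.Point.some _ _ hP = WeierstrassCurve.Affine.Point.some _ _ h3 ∧
        (4 : ℤ) • WeierstrassCurve.Affine.Point.some _ _ hP = WeierstrassCurve.Affine.Point.some _ _ h4 := by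
  refine ⟨hP_ns, h3_ns, h4_ns, ?_⟩
  have e1 := dbl1
  have e2 := dbl2
  have e3 := add21
  have e4 := dbl3
  have n2 := WeierstrassCurve.Affine.Point.some_ne_zero h2_ns
  have n3 := WeierstrassCurve.Affine.Point.some_ne_zero h3_ns
  generalize WeierstrassCurve.Affine.Point.some _ _ hP_ns = P at *
  generalize WeierstrassCurve.Affine.Point.some _ _ h2_ns = P2 at *
  generalize WeierstrassCurve.Affine.Point.some _ _ h3_ns = P3 at *
  generalize WeierstrassCurve.Affine.Point.some _ _ h4_ns = P4 at *
  subst e1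
  subst e2
  subst e3
  refine ⟨?_, by abel, by abel⟩
  rw [addOrderOf_eq_iff (by norm_num)]
  have e6 : 6 • P = 0 := by rw [← e4]; abel
  have m2 : 2 • P ≠ 0 := by rwa [two_nsmul]
  have m3 : 3 • P ≠ 0 := by
    intro h; apply n3; rw [← h]; abel
  refine ⟨e6, fun m hm hm0 h => ?_⟩
  interval_cases m
  · apply m2; rw [one_nsmul] at h; rw [h, smul_zero]
  · exact m2 h
  · exact m3 h
  · apply m2
    have : 2 • P = 6 • P - 4 • P := by abel
    rw [this, e6, h, sub_zero]
  · apply m2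
    have : 2 • P = 2 • (6 • P - 5 • P) := by abel
    rw [this, e6, h, sub_zero, two_nsmul, add_zero]
end
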